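/- arXiv:1707.02501 — 3 statements merged into one kernel-verified Lean document; each statement's English description precedes it below -/
import Mathlib

section
/- The set of pairs (x,y) ∈ ℚ × ℚ satisfying y² = (x³ + 4)(x⁴ + 8x³ + 16x² + 64) is exactly {(0, 16), (0, −16), (4, 272), (4, −272)}. -/
/-!
The two factors of the right-hand side have resultant `2 ^ 8 * 17 ^ 2`, so for a rational point
`(x, y)` there is `s ∈ {1, 17}` such that both `s (x³ + 4)` and `s (x⁴ + 8 x³ + 16 x² + 64)` are
squares.

For `s = 1` the quartic defines an elliptic curve of rank `0`, and infinite descent leaves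
`x ∈ {0, -4}`.

For `s = 17` the quartic defines a torsor under the elliptic curve `E : y² = 1 - 34 w² + 1445 w⁴`,
whose rational points are generated by a point `Q` of infinite order and the point `T = (0, -1)` of
order two. The coordinate `x` of a point of the torsor is a function of degree two on `E`, and the
two points of `E` above it have sum `Q + T`. Hence one of them is `m Q` or `m Q + T` with `m` even.
In the second case a sieve modulo the primes `47`, `433`, `593` and `1753` shows that `17 (x³ + 4)`
is not a square. In the first case write `m = 2 · 3ʲ k` with `3 ∤ k`, if `m ≠ 0`, and let `Y` be the
numerator of the ordinate of `k Q`. Modulo the odd part of `Y` the point `m Q` reduces to `T`, where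
`17 (x³ + 4) = -4 · 17 · 127`; this would make the Jacobi symbol `(Y | 17 · 127)` equal to `1`, but
reduction modulo `17` and `127` shows that it is `-1`. So `m = 0`, which gives `x = 4`.
-/

/-- A point of the Jacobi quartic `y² = 1 + a w² + b w⁴`, a model of an elliptic curve with neutral
element `(0, 1)` and the point `(0, -1)` of order two. -/
@[ext]
structure JacobiQuartic (K : Type*) [Field K] (a b : K) where
  w : K
  y : K
  eqn : y ^ 2 = 1 + a * w ^ 2 + b * w ^ 4

namespace JacobiQuartic

section Field

variable {K : Type*} [Field K] {a b : K}

instance : Zero (JacobiQuartic K a b) := ⟨⟨0, 1, by ring⟩⟩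

instance : Neg (JacobiQuartic K a b) := ⟨fun P ↦ ⟨-P.w, P.y, by rw [P.eqn]; ring⟩⟩

theorem zero_w : (0 : JacobiQuartic K a b).w = 0 := rfl

theorem zero_y : (0 : JacobiQuartic K a b).y = 1 := rfl

theorem neg_w (P : JacobiQuartic K a b) : (-P).w = -P.w := rfl

theorem neg_y (P : JacobiQuartic K a b) : (-P).y = P.y := rfl

/-- The point `(0, -1)` of order two. -/
def twoTorsion : JacobiQuartic K a b := ⟨0, -1, by ring⟩

theorem one_sub_mul_sq_ne_zero (hb : ¬IsSquare b) (w₁ w₂ : K) :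
    1 - b * w₁ ^ 2 * w₂ ^ 2 ≠ 0 := by
  intro h
  refine hb ⟨(w₁ * w₂)⁻¹, ?_⟩
  rw [← mul_inv]
  refine eq_inv_of_mul_eq_one_left ?_
  linear_combination -h

theorem add_assoc_w_identity {w₁ y₁ w₂ y₂ w₃ y₃ : K} (h₁ : y₁ ^ 2 = 1 + a * w₁ ^ 2 + b * w₁ ^ 4)
    (h₂ : y₂ ^ 2 = 1 + a * w₂ ^ 2 + b * w₂ ^ 4) (h₃ : y₃ ^ 2 = 1 + a * w₃ ^ 2 + b * w₃ ^ 4)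
    {N D M N' D' M' : K} (hN : N = w₁ * y₂ + y₁ * w₂) (hD : D = 1 - b * w₁ ^ 2 * w₂ ^ 2)
    (hM : M = (1 + b * w₁ ^ 2 * w₂ ^ 2) * (y₁ * y₂ + a * w₁ * w₂)
      + 2 * b * w₁ * w₂ * (w₁ ^ 2 + w₂ ^ 2))
    (hN' : N' = w₂ * y₃ + y₂ * w₃) (hD' : D' = 1 - b * w₂ ^ 2 * w₃ ^ 2)
    (hM' : M' = (1 + b * w₂ ^ 2 * w₃ ^ 2) * (y₂ * y₃ + a * w₂ * w₃)
      + 2 * b * w₂ * w₃ * (w₂ ^ 2 + w₃ ^ 2)) :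
    (D * N * y₃ + M * w₃) * (D' ^ 2 - b * N' ^ 2 * w₁ ^ 2)
      = (D' * N' * y₁ + M' * w₁) * (D ^ 2 - b * N ^ 2 * w₃ ^ 2) := by
  subst hN hD hM hN' hD' hM'
  grind

end Field

/-- Coefficients over an ordered field for which the Jacobi quartic has no points at infinity
(`b` is not a square) and none with `y = 0` (`1 + a u + b u²` is positive). Then the affine addition
formulas are total. -/
class IsAnisotropic {K : Type*} [Field K] [LT K] (a b : K) : Prop where
  not_isSquare : ¬IsSquare b
  sq_lt : a ^ 2 < 4 * b

section OrderedField

variable {K : Type*} [Field K] [LinearOrder K] [IsStrictOrderedRing K] {a b : K}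

theorem quadratic_form_pos (hab : a ^ 2 < 4 * b) {r : K} (hr : r ≠ 0) (s : K) :
    0 < r ^ 2 + a * r * s + b * s ^ 2 := by
  rcases eq_or_ne s 0 with rfl | hs
  · have : 0 < r ^ 2 := by positivity
    simpa using this
  · have : 0 < (4 * b - a ^ 2) * s ^ 2 := mul_pos (sub_pos.mpr hab) (by positivity)
    linarith [sq_nonneg (2 * r + a * s)]

theorem sign_add_eq_left {r s : K} (h : s ^ 2 < r ^ 2) :
    SignType.sign (r + s) = SignType.sign r := by
  have habs := abs_lt.mp (sq_lt_sq.mp h)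
  rcases lt_trichotomy r 0 with hr | rfl | hr
  · rw [abs_of_neg hr] at habs
    rw [sign_neg hr, sign_neg (by linarith)]
  · exact absurd h (by simpa using sq_nonneg s)
  · rw [abs_of_pos hr] at habs
    rw [sign_pos hr, sign_pos (by linarith)]

theorem ext_of_sign {P Q : JacobiQuartic K a b} (hw : P.w = Q.w)
    (hy : SignType.sign P.y = SignType.sign Q.y) : P = Q := by
  have hsq : P.y ^ 2 = Q.y ^ 2 := by rw [P.eqn, Q.eqn, hw]
  rcases sq_eq_sq_iff_eq_or_eq_neg.mp hsq with h | h
  · exact JacobiQuartic.ext hw h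
  · rw [h, Left.sign_neg] at hy
    have hQ : Q.y = 0 := by
      rcases lt_trichotomy Q.y 0 with h0 | h0 | h0
      · simp [sign_neg h0] at hy
      · exact h0
      · simp [sign_pos h0] at hy
    exact JacobiQuartic.ext hw (by simp [h, hQ])

variable [IsAnisotropic a b]

theorem y_ne_zero (P : JacobiQuartic K a b) : P.y ≠ 0 := by
  have hpos := quadratic_form_pos (IsAnisotropic.sq_lt (a := a) (b := b)) one_ne_zero (P.w ^ 2)
  intro hy
  have hP := P.eqn
  rw [hy] at hP
  linarith

instance : Add (JacobiQuartic K a b) where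
  add P Q :=
    { w := (P.w * Q.y + P.y * Q.w) / (1 - b * P.w ^ 2 * Q.w ^ 2)
      y := ((1 + b * P.w ^ 2 * Q.w ^ 2) * (P.y * Q.y + a * P.w * Q.w)
        + 2 * b * P.w * Q.w * (P.w ^ 2 + Q.w ^ 2)) / (1 - b * P.w ^ 2 * Q.w ^ 2) ^ 2
      eqn := by
        have := one_sub_mul_sq_ne_zero (IsAnisotropic.not_isSquare a (b := b)) P.w Q.w
        have hP := P.eqn
        have hQ := Q.eqn
        field_simp
        grind }

theorem add_w (P Q : JacobiQuartic K a b) :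
    (P + Q).w = (P.w * Q.y + P.y * Q.w) / (1 - b * P.w ^ 2 * Q.w ^ 2) := rfl

theorem add_y (P Q : JacobiQuartic K a b) :
    (P + Q).y = ((1 + b * P.w ^ 2 * Q.w ^ 2) * (P.y * Q.y + a * P.w * Q.w)
      + 2 * b * P.w * Q.w * (P.w ^ 2 + Q.w ^ 2)) / (1 - b * P.w ^ 2 * Q.w ^ 2) ^ 2 := rfl

/-- The real points form two ovals, distinguished by the sign of `y`, and the oval of `0` is a
subgroup of index two. -/
theorem sign_y_add (P Q : JacobiQuartic K a b) :
    SignType.sign (P + Q).y = SignType.sign P.y * SignType.sign Q.y := by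
  set A := 1 + b * P.w ^ 2 * Q.w ^ 2 with hA
  set q := P.w ^ 2 + Q.w ^ 2 with hq
  have hab := IsAnisotropic.sq_lt (a := a) (b := b)
  have hb : 0 < b := by nlinarith [sq_nonneg a]
  have hA_pos : 0 < A := by positivity
  have hD_ne := one_sub_mul_sq_ne_zero (IsAnisotropic.not_isSquare a (b := b)) P.w Q.w
  have hD_pos : 0 < (1 - b * P.w ^ 2 * Q.w ^ 2) ^ 2 := by positivity
  have hsq : (P.w * Q.w * (2 * b * q + a * A)) ^ 2 < (A * (P.y * Q.y)) ^ 2 := by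
    have hfactor : (A * (P.y * Q.y)) ^ 2 - (P.w * Q.w * (2 * b * q + a * A)) ^ 2
        = (1 - b * P.w ^ 2 * Q.w ^ 2) ^ 2 * (A ^ 2 + a * A * q + b * q ^ 2) := by
      rw [mul_pow A, mul_pow P.y, P.eqn, Q.eqn, hA, hq]
      ring
    have := mul_pos hD_pos (quadratic_form_pos hab hA_pos.ne' q)
    linarith
  calc SignType.sign (P + Q).y
      = SignType.sign ((P + Q).y * (1 - b * P.w ^ 2 * Q.w ^ 2) ^ 2) := by
        rw [sign_mul, sign_pos hD_pos, mul_one]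
    _ = SignType.sign (A * (P.y * Q.y) + P.w * Q.w * (2 * b * q + a * A)) := by
        rw [add_y, div_mul_cancel₀ _ hD_pos.ne']
        congr 1
        ring
    _ = SignType.sign P.y * SignType.sign Q.y := by
        rw [sign_add_eq_left hsq, sign_mul, sign_mul, sign_pos hA_pos, one_mul]

theorem add_assoc_w (P Q R : JacobiQuartic K a b) : (P + Q + R).w = (P + (Q + R)).w := by
  have hden := one_sub_mul_sq_ne_zero (IsAnisotropic.not_isSquare a (b := b))
  have key := add_assoc_w_identity P.eqn Q.eqn R.eqn rfl rfl rfl rfl rfl rfl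
  rw [add_w (P + Q), add_w P (Q + R), div_eq_div_iff (hden _ _) (hden _ _)]
  simp only [add_w, add_y]
  have hD := hden P.w Q.w
  have hD' := hden Q.w R.w
  generalize 1 - b * P.w ^ 2 * Q.w ^ 2 = D at *
  generalize 1 - b * Q.w ^ 2 * R.w ^ 2 = D' at *
  field_simp
  linear_combination key

instance : AddCommGroup (JacobiQuartic K a b) where
  zero_add P := by ext <;> simp [add_w, add_y, zero_w, zero_y]
  add_zero P := by ext <;> simp [add_w, add_y, zero_w, zero_y]
  neg_add_cancel P := by
    refine ext_of_sign (by simp [add_w, neg_w, neg_y, zero_w, mul_comm]) ?_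
    rw [sign_y_add, neg_y, zero_y, ← sign_mul, sign_pos (mul_self_pos.mpr P.y_ne_zero), sign_one]
  add_comm P Q := by ext <;> simp only [add_w, add_y] <;> ring
  add_assoc P Q R := ext_of_sign (add_assoc_w P Q R) (by simp only [sign_y_add, mul_assoc])
  nsmul := nsmulRec
  zsmul := zsmulRec

theorem add_twoTorsion_w (P : JacobiQuartic K a b) : (P + twoTorsion).w = -P.w := by
  simp [add_w, twoTorsion]

theorem add_twoTorsion_y (P : JacobiQuartic K a b) : (P + twoTorsion).y = -P.y := by
  simp [add_y, twoTorsion]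

theorem twoTorsion_add_self : (twoTorsion + twoTorsion : JacobiQuartic K a b) = 0 :=
  JacobiQuartic.ext (by rw [add_twoTorsion_w]; exact neg_zero)
    (by rw [add_twoTorsion_y]; exact neg_neg 1)

end OrderedField

end JacobiQuartic

section FourthPowers

theorem isCoprime_of_forall_prime_not_dvd {x y : ℤ} (h : ∀ ℓ : ℤ, Prime ℓ → ℓ ∣ x → ¬ℓ ∣ y) :
    IsCoprime x y :=
  isCoprime_of_prime_dvd
    (fun ⟨hx, hy⟩ ↦ h 2 Int.prime_two (hx ▸ dvd_zero 2) (hy ▸ dvd_zero 2)) h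

theorem exists_sign_mul_pow_four_of_mul_eq_pow_four {x y k : ℤ} (hxy : IsCoprime x y)
    (h : x * y = k ^ 4) :
    ∃ ε i j : ℤ, ε * ε = 1 ∧ x = ε * i ^ 4 ∧ y = ε * j ^ 4 ∧ k = i * j := by
  obtain ⟨i, hi⟩ := exists_associated_pow_of_mul_eq_pow' hxy h
  obtain ⟨j, hj⟩ := exists_associated_pow_of_mul_eq_pow' hxy.symm (by rw [mul_comm, h])
  have same_sign (ε : ℤ) (hε : ε * ε = 1) (hx : x = ε * i ^ 4) (hy : y = ε * j ^ 4) :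
      ∃ ε i j : ℤ, ε * ε = 1 ∧ x = ε * i ^ 4 ∧ y = ε * j ^ 4 ∧ k = i * j := by
    have hk : k ^ 4 = (i * j) ^ 4 := by rw [← h, hx, hy]; linear_combination (i * j) ^ 4 * hε
    rcases (pow_eq_pow_iff_of_ne_zero (by norm_num)).mp hk with hk | ⟨hk, -⟩
    · exact ⟨ε, i, j, hε, hx, hy, hk⟩
    · exact ⟨ε, -i, j, hε, by rw [hx]; ring, hy, by rw [hk]; ring⟩
  have opposite_sign (hij : (i * j) ^ 4 = -k ^ 4) : i = 0 ∨ j = 0 := by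
    have : (i * j) ^ 4 = 0 := by
      have := (by decide : Even 4).pow_nonneg (i * j)
      have := (by decide : Even 4).pow_nonneg k
      omega
    simpa using this
  rcases Int.associated_iff.mp hi with hx | hx <;> rcases Int.associated_iff.mp hj with hy | hy
  · exact same_sign 1 (by norm_num) (by linarith) (by linarith)
  · rcases opposite_sign (by rw [← h, mul_pow, hx, hy]; ring) with rfl | rfl
    · exact same_sign (-1) (by norm_num) (by rw [← hx]; norm_num) (by linarith)
    · exact same_sign 1 (by norm_num) (by linarith) (by linarith)
  · rcases opposite_sign (by rw [← h, mul_pow, hx, hy]; ring) with rfl | rfl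
    · exact same_sign 1 (by norm_num) (by linarith) (by linarith)
    · exact same_sign (-1) (by norm_num) (by linarith) (by rw [← hy]; norm_num)
  · exact same_sign (-1) (by norm_num) (by linarith) (by linarith)

theorem exists_mul_pow_four_of_mul_eq_mul_pow_four {x y B k : ℤ} (hxy : IsCoprime x y) (hB : B ≠ 0)
    (h : x * y = B * k ^ 4) :
    ∃ B₁ B₂ i j : ℤ, B₁ * B₂ = B ∧ x = B₁ * i ^ 4 ∧ y = B₂ * j ^ 4 ∧ k = i * j := by
  obtain ⟨B₁, B₂, ⟨x', rfl⟩, ⟨y', rfl⟩, rfl⟩ := exists_dvd_and_dvd_of_dvd_mul (Dvd.intro _ h.symm)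
  have hmul : x' * y' = k ^ 4 := mul_left_cancel₀ hB (by linear_combination h)
  obtain ⟨ε, i, j, hε, rfl, rfl, hk⟩ := exists_sign_mul_pow_four_of_mul_eq_pow_four
    hxy.of_mul_left_right.of_mul_right_right hmul
  exact ⟨B₁ * ε, B₂ * ε, i, j, by linear_combination B₁ * B₂ * hε, by ring, by ring, hk⟩

theorem isCoprime_of_add_eq_of_mul_eq {D a b r C k P R : ℤ} (hb : Squarefree b)
    (hCk : IsCoprime C k) (hsub : IsCoprime (D * r) (R - P))
    (hsum : P + R = D * C ^ 2 - a * k ^ 2) (hmul : P * R = b * r ^ 2 * k ^ 4) :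
    IsCoprime P R := by
  refine isCoprime_of_forall_prime_not_dvd fun ℓ hℓ hℓP hℓR ↦ ?_
  have hℓDr : ¬ℓ ∣ D * r := fun hℓDr ↦
    hℓ.not_isUnit (hsub.isUnit_of_dvd' hℓDr (dvd_sub hℓR hℓP))
  have hℓk : ℓ ∣ k := by
    have hsq : ℓ ^ 2 ∣ r ^ 2 * (k ^ 4 * b) := by
      have := mul_dvd_mul hℓP hℓR
      rwa [hmul, ← sq, show b * r ^ 2 * k ^ 4 = r ^ 2 * (k ^ 4 * b) by ring] at this
    have hℓr : ¬ℓ ∣ r ^ 2 := fun h ↦ hℓDr (dvd_mul_of_dvd_right (hℓ.dvd_of_dvd_pow h) D)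
    by_contra hℓk
    have hℓb : ℓ ^ 2 ∣ b := hℓ.pow_dvd_of_dvd_mul_left 2 (fun h ↦ hℓk (hℓ.dvd_of_dvd_pow h))
      (hℓ.pow_dvd_of_dvd_mul_left 2 hℓr hsq)
    exact hℓ.not_isUnit (hb ℓ (sq ℓ ▸ hℓb))
  have hℓC : ℓ ∣ D * C ^ 2 := by
    have := dvd_add (hsum ▸ dvd_add hℓP hℓR) (dvd_mul_of_dvd_right (dvd_pow hℓk two_ne_zero) a)
    rwa [sub_add_cancel] at this
  rcases hℓ.dvd_or_dvd hℓC with hℓD | hℓC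
  · exact hℓDr (dvd_mul_of_dvd_left hℓD r)
  · exact hℓ.not_isUnit (hCk.isUnit_of_dvd' (hℓ.dvd_of_dvd_pow hℓC) hℓk)

/-- Descent along the `2`-isogeny between the quartics `W² = (D C² - a k²)² - 4 b r² k⁴` and
`D C² = B₁ i⁴ + a i² j² + B₂ j⁴`, `B₁ B₂ = b r²`. -/
theorem exists_quartic_of_sq_sub_four_mul_eq_sq {D a b r C k W : ℤ} (hb : Squarefree b) (hr : r ≠ 0)
    (hCk : IsCoprime C k) (hW : IsCoprime (D * r) W)
    (h : (D * C ^ 2 - a * k ^ 2) ^ 2 - 4 * b * r ^ 2 * k ^ 4 = W ^ 2) :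
    ∃ B₁ B₂ i j : ℤ, B₁ * B₂ = b * r ^ 2 ∧ IsCoprime (B₁ * i) (B₂ * j) ∧ k = i * j ∧
      D * C ^ 2 = B₁ * i ^ 4 + a * i ^ 2 * j ^ 2 + B₂ * j ^ 4 := by
  obtain ⟨P, hP⟩ : (2 : ℤ) ∣ D * C ^ 2 - a * k ^ 2 - W := by
    have : Even ((D * C ^ 2 - a * k ^ 2) ^ 2 - W ^ 2) := ⟨2 * b * r ^ 2 * k ^ 4, by linarith⟩
    rw [← even_iff_two_dvd]
    simpa [Int.even_sub, Int.even_pow] using this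
  obtain ⟨R, hR⟩ : ∃ R, R = P + W := ⟨_, rfl⟩
  have hsum : P + R = D * C ^ 2 - a * k ^ 2 := by linarith
  have hmul : P * R = b * r ^ 2 * k ^ 4 := by
    have : 4 * (P * R) = (P + R) ^ 2 - W ^ 2 := by rw [hR]; ring
    rw [hsum] at this
    linarith
  have hPR : IsCoprime P R :=
    isCoprime_of_add_eq_of_mul_eq hb hCk (by rwa [hR, add_sub_cancel_left]) hsum hmul
  obtain ⟨B₁, B₂, i, j, hB, rfl, rfl, rfl⟩ :=
    exists_mul_pow_four_of_mul_eq_mul_pow_four hPR (mul_ne_zero hb.ne_zero (pow_ne_zero 2 hr)) hmul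
  refine ⟨B₁, B₂, i, j, hB, ?_, rfl, by linear_combination -hsum⟩
  have hpow (B i : ℤ) : B * i ∣ B * i ^ 4 := mul_dvd_mul_left B (dvd_pow_self i (by norm_num))
  exact (hPR.of_isCoprime_of_dvd_left (hpow _ _)).of_isCoprime_of_dvd_right (hpow _ _)

theorem pos_of_quartic_form_nonneg {B₁ B₂ a i j : ℤ} (hij : IsCoprime i j)
    (ha : a ^ 2 < 4 * (B₁ * B₂)) (h : 0 ≤ B₁ * i ^ 4 + a * i ^ 2 * j ^ 2 + B₂ * j ^ 4) :
    0 < B₁ ∧ 0 < B₂ := by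
  have hB : 0 < B₁ * B₂ := by linarith [sq_nonneg a]
  have hB₁ : 0 < B₁ := by
    have hform : 0 < (2 * B₁ * i ^ 2 + a * j ^ 2) ^ 2 + (4 * (B₁ * B₂) - a ^ 2) * j ^ 4 := by
      rcases eq_or_ne j 0 with rfl | hj
      · have hi : i ≠ 0 := by rintro rfl; exact not_isCoprime_zero_zero hij
        have := left_ne_zero_of_mul hB.ne'
        simp only [ne_eq, OfNat.ofNat_ne_zero, not_false_eq_true, zero_pow, mul_zero, add_zero]
        positivity
      · have := sub_pos.mpr ha
        positivity
    by_contra! hle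
    have := mul_nonneg (neg_nonneg.mpr hle) h
    linarith
  exact ⟨hB₁, pos_of_mul_pos_right hB hB₁.le⟩

theorem exists_quartic_of_prime {D a p C k W : ℤ} (hp : Prime p) (hD : 0 ≤ D) (ha : a ^ 2 < 4 * p)
    (hCk : IsCoprime C k) (hW : IsCoprime D W)
    (h : (D * C ^ 2 - a * k ^ 2) ^ 2 - 4 * p * k ^ 4 = W ^ 2) :
    ∃ i j : ℤ, IsCoprime i (p * j) ∧ k = i * j ∧
      D * C ^ 2 = i ^ 4 + a * i ^ 2 * j ^ 2 + p * j ^ 4 := by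
  obtain ⟨B₁, B₂, i, j, hB, hcop, rfl, hC⟩ := exists_quartic_of_sq_sub_four_mul_eq_sq
    (a := a) (r := 1) hp.squarefree one_ne_zero hCk (by rwa [mul_one]) (by linear_combination h)
  rw [one_pow, mul_one] at hB
  obtain ⟨hB₁, hB₂⟩ := pos_of_quartic_form_nonneg hcop.of_mul_left_right.of_mul_right_right
    (hB ▸ ha) (by rw [← hC]; positivity)
  rcases hp.irreducible.isUnit_or_isUnit hB.symm with hu | hu
  · obtain rfl : B₁ = 1 := (Int.isUnit_iff.mp hu).resolve_right (by omega)
    obtain rfl : B₂ = p := by rw [← hB, one_mul]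
    exact ⟨i, j, by rwa [one_mul] at hcop, rfl, by linear_combination hC⟩
  · obtain rfl : B₂ = 1 := (Int.isUnit_iff.mp hu).resolve_right (by omega)
    obtain rfl : B₁ = p := by rw [← hB, mul_one]
    exact ⟨j, i, by rw [one_mul] at hcop; exact hcop.symm, mul_comm _ _, by linear_combination hC⟩

theorem exists_quartic_of_prime_right {D a b r C k W : ℤ} (hb : Squarefree b) (hr : Prime r)
    (hCk : IsCoprime C k) (hW : IsCoprime (D * r) W)
    (h : (D * C ^ 2 - a * k ^ 2) ^ 2 - 4 * b * r ^ 2 * k ^ 4 = W ^ 2) :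
    ∃ B₁ B₂ i j : ℤ, B₁ * B₂ = b ∧ IsCoprime (B₁ * i) (r * B₂ * j) ∧ k = i * j ∧
      D * C ^ 2 = B₁ * i ^ 4 + a * i ^ 2 * j ^ 2 + B₂ * r ^ 2 * j ^ 4 := by
  have of_isCoprime {A₁ A₂ i j : ℤ} (hA : A₁ * A₂ = b * r ^ 2) (hcop : IsCoprime (A₁ * i) (A₂ * j))
      (hrA : IsCoprime r A₁) (hk : k = i * j)
      (hC : D * C ^ 2 = A₁ * i ^ 4 + a * i ^ 2 * j ^ 2 + A₂ * j ^ 4) :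
      ∃ B₁ B₂ i j : ℤ, B₁ * B₂ = b ∧ IsCoprime (B₁ * i) (r * B₂ * j) ∧ k = i * j ∧
        D * C ^ 2 = B₁ * i ^ 4 + a * i ^ 2 * j ^ 2 + B₂ * r ^ 2 * j ^ 4 := by
    obtain ⟨B₂, rfl⟩ : A₁ ∣ b :=
      (IsCoprime.pow_right hrA.symm).dvd_of_dvd_mul_right (Dvd.intro _ hA)
    have hA₁ : A₁ ≠ 0 := left_ne_zero_of_mul hb.ne_zero
    obtain rfl : A₂ = B₂ * r ^ 2 := mul_left_cancel₀ hA₁ (by rw [hA, mul_assoc])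
    refine ⟨A₁, B₂, i, j, rfl, hcop.of_isCoprime_of_dvd_right ⟨r, by ring⟩, hk, hC⟩
  obtain ⟨A₁, A₂, i, j, hA, hcop, hk, hC⟩ :=
    exists_quartic_of_sq_sub_four_mul_eq_sq hb hr.ne_zero hCk hW h
  by_cases hrA : r ∣ A₁
  · have hrA₂ : IsCoprime r A₂ :=
      hcop.of_mul_left_left.of_mul_right_left.of_isCoprime_of_dvd_left hrA
    exact of_isCoprime (by rw [mul_comm, hA]) hcop.symm hrA₂ (by rw [hk, mul_comm])
      (by rw [hC]; ring)
  · exact of_isCoprime hA hcop (hr.irreducible.coprime_iff_not_dvd.mpr hrA) hk hC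

end FourthPowers

section RankZero

theorem exists_of_sq_add_two_mul_sq_sub_eq_sq {C k W : ℤ} (hCk : IsCoprime C k)
    (h : (C ^ 2 + 2 * k ^ 2) ^ 2 - 20 * k ^ 4 = W ^ 2) :
    ∃ m n : ℤ, IsCoprime m n ∧ k = m * n ∧ C ^ 2 = (m ^ 2 - n ^ 2) ^ 2 + 4 * n ^ 4 := by
  obtain ⟨m, n, hmn, hk, hC⟩ := exists_quartic_of_prime (D := 1) (a := -2) (p := 5)
    (Int.prime_iff_natAbs_prime.mpr (by norm_num)) zero_le_one (by norm_num) hCk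
    isCoprime_one_left (W := W) (by linear_combination h)
  exact ⟨m, n, hmn.of_mul_right_right, hk, by linear_combination hC⟩

theorem exists_of_sq_sub_sq_sq_add_eq_sq {m n z : ℤ} (hmn : IsCoprime m n)
    (h : (m ^ 2 - n ^ 2) ^ 2 + 4 * n ^ 4 = z ^ 2) :
    ∃ i j : ℤ, IsCoprime i j ∧ n = i * j ∧ i ^ 4 + i ^ 2 * j ^ 2 - j ^ 4 = m ^ 2 := by
  obtain ⟨B₁, B₂, i, j, hB, hcop, hk, hm⟩ := exists_quartic_of_sq_sub_four_mul_eq_sq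
    (D := 1) (a := 1) (b := -1) (r := 1) (W := z) isUnit_neg_one.squarefree one_ne_zero hmn
    (by simpa using isCoprime_one_left) (by linear_combination h)
  have hij : IsCoprime i j := hcop.of_mul_left_right.of_mul_right_right
  rcases Int.mul_eq_neg_one_iff_eq_one_or_neg_one.mp (by simpa using hB) with
    ⟨rfl, rfl⟩ | ⟨rfl, rfl⟩
  · exact ⟨i, j, hij, hk, by linear_combination -hm⟩
  · exact ⟨j, i, hij.symm, by rw [hk, mul_comm], by linear_combination -hm⟩

theorem eq_zero_or_sq_eq_one_of_quartic_eq_sq {X Y Z : ℤ} (hXY : IsCoprime X Y)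
    (h : X ^ 4 + X ^ 2 * Y ^ 2 - Y ^ 4 = Z ^ 2) : Y = 0 ∨ X ^ 2 = 1 ∧ Y ^ 2 = 1 := by
  induction hN : Y.natAbs using Nat.strong_induction_on generalizing X Y Z with
  | _ N ih =>
  subst hN
  refine or_iff_not_imp_left.mpr fun hY ↦ ?_
  have descend {C k W : ℤ} (hkY : k ∣ Y) (hCk : IsCoprime C k)
      (hW : (C ^ 2 + 2 * k ^ 2) ^ 2 - 20 * k ^ 4 = W ^ 2) : k ^ 2 = 1 ∧ C ^ 2 = 4 := by
    obtain ⟨m, n, hmn, hk, hC⟩ := exists_of_sq_add_two_mul_sq_sub_eq_sq hCk hW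
    obtain ⟨i, j, hij, hn, hm⟩ := exists_of_sq_sub_sq_sq_add_eq_sq hmn hC.symm
    subst hn hk
    have hj0 : j ≠ 0 := by rintro rfl; exact hY (by simpa using hkY)
    have hjY : j ∣ Y := (Dvd.intro_left _ (by ring : m * i * j = _)).trans hkY
    have hij1 : i ^ 2 = 1 ∧ j ^ 2 = 1 := by
      rcases (Int.natAbs_le_of_dvd_ne_zero hjY hY).lt_or_eq with hlt | heq
      · exact (ih _ hlt hij hm rfl).resolve_left hj0
      · have hmi : IsUnit (m * i) := by
          refine isUnit_of_dvd_one ((mul_dvd_mul_iff_right hj0).mp ?_)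
          rw [one_mul, mul_assoc]
          exact hkY.trans (Int.natAbs_dvd_natAbs.mp heq.symm.dvd)
        have hm2 : m ^ 2 = 1 := Int.isUnit_sq (isUnit_of_mul_isUnit_left hmi)
        have hi2 : i ^ 2 = 1 := Int.isUnit_sq (isUnit_of_mul_isUnit_right hmi)
        refine ⟨hi2, mul_left_cancel₀ (pow_ne_zero 2 hj0) ?_⟩
        linear_combination -hm - hm2 + (i ^ 2 + 1 + j ^ 2) * hi2
    have hm1 : m ^ 2 = 1 := by
      linear_combination -hm + (i ^ 2 + 1 + j ^ 2) * hij1.1 - j ^ 2 * hij1.2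
    have hk2 : (m * (i * j)) ^ 2 = 1 := by rw [mul_pow, mul_pow, hm1, hij1.1, hij1.2]; norm_num
    have hn2 : (i * j) ^ 2 = 1 := by rw [mul_pow, hij1.1, hij1.2, one_mul]
    exact ⟨hk2, by rw [hC, hm1, show (i * j) ^ 4 = ((i * j) ^ 2) ^ 2 by ring, hn2]; norm_num⟩
  rcases Int.even_or_odd' Y with ⟨k, rfl | hk⟩
  · obtain ⟨-, hX⟩ := descend (dvd_mul_left k 2) hXY.of_mul_right_right (W := Z)
      (by linear_combination h)
    have h2X : (2 : ℤ) ∣ X := Int.prime_two.dvd_of_dvd_pow (n := 2) (hX ▸ by norm_num)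
    exact absurd (hXY.isUnit_of_dvd' h2X (dvd_mul_right 2 k)) Int.prime_two.not_isUnit
  · have h2Y : IsCoprime 2 Y := ⟨-k, 1, by rw [hk]; ring⟩
    obtain ⟨hY1, hX4⟩ := descend dvd_rfl (h2Y.mul_left hXY) (W := 4 * Z)
      (by linear_combination 16 * h)
    exact ⟨by linarith, hY1⟩

theorem sq_eq_one_of_quartic_isSquare {r : ℚ} (h : IsSquare (r ^ 4 - 2 * r ^ 2 + 5)) :
    r ^ 2 = 1 := by
  obtain ⟨v, hv⟩ := h
  obtain ⟨z, hz⟩ : IsSquare ((r.num ^ 2 - r.den ^ 2) ^ 2 + 4 * r.den ^ 4 : ℤ) := by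
    rw [← Rat.isSquare_intCast_iff]
    refine ⟨v * r.den ^ 2, ?_⟩
    push_cast
    rw [← r.mul_den_eq_num]
    linear_combination (r.den : ℚ) ^ 4 * hv
  obtain ⟨i, j, hij, hn, hm⟩ :=
    exists_of_sq_sub_sq_sq_add_eq_sq (z := z) r.isCoprime_num_den (by linear_combination hz)
  rcases eq_zero_or_sq_eq_one_of_quartic_eq_sq hij hm with rfl | ⟨hi, hj⟩
  · exact absurd hn (by simp)
  · have hnum : (r.num : ℚ) ^ 2 = 1 := by
      exact_mod_cast (show r.num ^ 2 = 1 by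
        linear_combination -hm + (i ^ 2 + 1 + j ^ 2) * hi - j ^ 2 * hj)
    have hden : (r.den : ℚ) ^ 2 = 1 := by
      exact_mod_cast (show (r.den : ℤ) ^ 2 = 1 by rw [hn, mul_pow, hi, hj, one_mul])
    rw [← r.num_div_den, div_pow, hnum, hden, div_one]

end RankZero

section MordellWeilDescent

theorem prime_seventeen : Prime (17 : ℤ) :=
  Int.prime_iff_natAbs_prime.mpr (by norm_num)

theorem prime_five : Prime (5 : ℤ) :=
  Int.prime_iff_natAbs_prime.mpr (by norm_num)

theorem seventeen_dvd_of_dvd_sq_sub_five_mul_sq {u v : ℤ} (h : 17 ∣ u ^ 2 - 5 * v ^ 2) :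
    17 ∣ v := by
  have five_nonresidue : ∀ u v : ZMod 17, u ^ 2 - 5 * v ^ 2 = 0 → v = 0 := by decide
  have := (ZMod.intCast_zmod_eq_zero_iff_dvd _ 17).mpr h
  push_cast at this
  exact (ZMod.intCast_zmod_eq_zero_iff_dvd _ 17).mp (five_nonresidue _ _ this)

theorem isCoprime_seventeen_of_rep {α β Y : ℤ} (hαβ : IsCoprime α β)
    (h : Y ^ 2 = β ^ 4 - 34 * α ^ 2 * β ^ 2 + 1445 * α ^ 4) : IsCoprime 17 β := by
  rw [prime_seventeen.irreducible.coprime_iff_not_dvd]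
  rintro ⟨β', rfl⟩
  obtain ⟨Y', rfl⟩ : 17 ∣ Y := prime_seventeen.dvd_of_dvd_pow (n := 2)
    ⟨17 ^ 3 * β' ^ 4 - 34 * 17 * α ^ 2 * β' ^ 2 + 85 * α ^ 4, by rw [h]; ring⟩
  have hα : 17 ∣ α ^ 2 := seventeen_dvd_of_dvd_sq_sub_five_mul_sq (u := Y')
    ⟨17 * β' ^ 4 - 2 * α ^ 2 * β' ^ 2, by linarith⟩
  exact prime_seventeen.not_isUnit
    (hαβ.isUnit_of_dvd' (prime_seventeen.dvd_of_dvd_pow hα) (dvd_mul_right 17 β'))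

theorem exists_first_descent {α β Y : ℤ} (hαβ : IsCoprime α β)
    (h : Y ^ 2 = β ^ 4 - 34 * α ^ 2 * β ^ 2 + 1445 * α ^ 4) :
    ∃ e c : ℤ, IsCoprime e (17 * c) ∧ α = e * c ∧ Y ^ 2 = (e ^ 4 + 289 * c ^ 4) ^ 2 ∧
      (β ^ 2 = e ^ 4 + 17 * e ^ 2 * c ^ 2 - 289 * c ^ 4 ∨
        β ^ 2 = 289 * c ^ 4 + 17 * e ^ 2 * c ^ 2 - e ^ 4) := by
  have h17Y : IsCoprime 17 Y := by
    have : IsCoprime 17 (Y ^ 2) := by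
      rw [h, show β ^ 4 - 34 * α ^ 2 * β ^ 2 + 1445 * α ^ 4
        = β ^ 4 + 17 * (85 * α ^ 4 - 2 * α ^ 2 * β ^ 2) by ring]
      exact (isCoprime_seventeen_of_rep hαβ h).pow_right.add_mul_left_right _
    exact (IsCoprime.pow_right_iff two_pos).mp this
  obtain ⟨B₁, B₂, e, c, hB, hcop, rfl, hβ⟩ := exists_quartic_of_prime_right (D := 1) (a := 17)
    (b := -1) (W := Y) isUnit_neg_one.squarefree prime_seventeen hαβ.symm (by simpa using h17Y)
    (by linear_combination -h)
  rw [one_mul] at hβ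
  have hY : Y ^ 2 = (B₁ * e ^ 4 - B₂ * 17 ^ 2 * c ^ 4) ^ 2 := by
    rw [show Y ^ 2 = (β ^ 2 - 17 * (e * c) ^ 2) ^ 2 + 4 * 17 ^ 2 * (e * c) ^ 4 by rw [h]; ring, hβ]
    linear_combination (4 * 17 ^ 2 * e ^ 4 * c ^ 4) * hB
  rcases Int.mul_eq_neg_one_iff_eq_one_or_neg_one.mp hB with ⟨rfl, rfl⟩ | ⟨rfl, rfl⟩
  · exact ⟨e, c, by simpa [IsCoprime.neg_right_iff] using hcop, rfl, by rw [hY]; ring,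
      Or.inl (by rw [hβ]; ring)⟩
  · exact ⟨e, c, by simpa [IsCoprime.neg_left_iff] using hcop, rfl, by rw [hY]; ring,
      Or.inr (by rw [hβ]; ring)⟩

theorem exists_isCoprime_of_quartic_two_mul {D a N x y β : ℤ} (hxy : IsCoprime x y)
    (h : (D * (2 * x) ^ 2 - a * y ^ 2) ^ 2 - 4 * N * y ^ 4 = (4 * β) ^ 2) :
    ∃ C k W : ℤ, IsCoprime C k ∧ (D * C ^ 2 - a * k ^ 2) ^ 2 - 4 * N * k ^ 4 = W ^ 2 ∧
      C ^ 2 ≤ 4 * x ^ 2 ∧ W ∣ 4 * β ∧ x * y * W = 2 * (C * k) * β := by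
  rcases Int.even_or_odd' y with ⟨k, rfl | hy⟩
  · refine ⟨x, k, β, hxy.of_mul_right_right, ?_, by linarith [sq_nonneg x], dvd_mul_left β 4,
      by ring⟩
    linarith
  · have h2y : IsCoprime 2 y := ⟨-k, 1, by rw [hy]; ring⟩
    exact ⟨2 * x, y, 4 * β, h2y.mul_left hxy, h, by linarith, dvd_rfl, by ring⟩

theorem exists_second_descent_one {e c β : ℤ} (hec : IsCoprime e (17 * c))
    (h : β ^ 2 = e ^ 4 + 17 * e ^ 2 * c ^ 2 - 289 * c ^ 4) :
    ∃ s t C : ℤ, IsCoprime s (5 * t) ∧ C ^ 2 = s ^ 4 - 34 * s ^ 2 * t ^ 2 + 1445 * t ^ 4 ∧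
      C ^ 2 ≤ 4 * e ^ 2 ∧ e * c * (s ^ 4 - 1445 * t ^ 4) = 2 * (s * t) * C * β := by
  have hβ : IsCoprime 17 β := by
    have : IsCoprime 17 (β ^ 2) := by
      rw [h, show e ^ 4 + 17 * e ^ 2 * c ^ 2 - 289 * c ^ 4
        = e ^ 4 + 17 * (e ^ 2 * c ^ 2 - 17 * c ^ 4) by ring]
      exact hec.of_mul_right_left.symm.pow_right.add_mul_left_right _
    exact (IsCoprime.pow_right_iff two_pos).mp this
  obtain ⟨C, k, W, hCk, hW, hCe, hWβ, hβW⟩ := exists_isCoprime_of_quartic_two_mul (D := 1)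
    (a := -34) (N := 1445) (β := β) hec.of_mul_right_right (by linear_combination -16 * h)
  have h17W : IsCoprime (1 * 17) W :=
    IsCoprime.of_isCoprime_of_dvd_right (IsCoprime.mul_right (by norm_num) hβ) hWβ
  obtain ⟨B₁, B₂, s, t, hB, hcop, rfl, hC⟩ := exists_quartic_of_prime_right (D := 1) (a := -34)
    (b := 5) (W := W) prime_five.squarefree prime_seventeen hCk h17W (by linear_combination hW)
  have hC' : C ^ 2 = B₁ * s ^ 4 - 34 * s ^ 2 * t ^ 2 + B₂ * 17 ^ 2 * t ^ 4 := by
    linear_combination hC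
  have hst : IsCoprime s t := hcop.of_mul_left_right.of_mul_right_right
  have hW' : W ^ 2 = (B₁ * s ^ 4 - B₂ * 17 ^ 2 * t ^ 4) ^ 2 := by
    rw [← hW, hC]
    linear_combination (4 * 17 ^ 2 * s ^ 4 * t ^ 4) * hB
  obtain ⟨hB₁, -⟩ := pos_of_quartic_form_nonneg (B₁ := B₁) (a := -34) (B₂ := B₂ * 17 ^ 2) hst
    (by linarith) (by linarith [sq_nonneg C])
  lift B₁ to ℕ using hB₁.le
  rcases (Nat.dvd_prime Nat.prime_five).mp (Int.natCast_dvd_natCast.mp (Dvd.intro _ hB))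
    with rfl | rfl
  · obtain rfl : B₂ = 5 := by simpa using hB
    rw [Nat.cast_one, one_mul, mul_assoc] at hcop
    rcases sq_eq_sq_iff_eq_or_eq_neg.mp hW' with rfl | rfl
    · exact ⟨s, t, C, hcop.of_mul_right_right, by rw [hC']; ring, hCe,
        by linear_combination hβW⟩
    · exact ⟨s, t, -C, hcop.of_mul_right_right, by rw [neg_sq, hC']; ring, by rwa [neg_sq],
        by linear_combination -hβW⟩
  · obtain rfl : B₂ = 1 := by push_cast at hB; linarith
    have hs : 17 ∣ s ^ 2 := seventeen_dvd_of_dvd_sq_sub_five_mul_sq (u := C)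
      ⟨17 * t ^ 4 - 2 * s ^ 2 * t ^ 2, by rw [hC']; push_cast; ring⟩
    exact absurd (hcop.of_mul_left_right.of_mul_right_left.of_mul_right_left.isUnit_of_dvd'
      (prime_seventeen.dvd_of_dvd_pow hs) dvd_rfl) prime_seventeen.not_isUnit

theorem exists_second_descent_two {e c β : ℤ} (hec : IsCoprime e (17 * c))
    (h : β ^ 2 = 289 * c ^ 4 + 17 * e ^ 2 * c ^ 2 - e ^ 4) :
    ∃ s t v : ℤ, IsCoprime s (5 * t) ∧ 17 * v ^ 2 = s ^ 4 - 2 * s ^ 2 * t ^ 2 + 5 * t ^ 4 ∧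
      v ^ 2 ≤ 4 * c ^ 2 ∧ e * c * (s ^ 4 - 5 * t ^ 4) = 2 * (s * t) * v * β := by
  have hβ : IsCoprime 17 β := by
    have : IsCoprime 17 (β ^ 2) := by
      rw [h, show 289 * c ^ 4 + 17 * e ^ 2 * c ^ 2 - e ^ 4
        = -e ^ 4 + 17 * (e ^ 2 * c ^ 2 + 17 * c ^ 4) by ring]
      exact hec.of_mul_right_left.symm.pow_right.neg_right.add_mul_left_right _
    exact (IsCoprime.pow_right_iff two_pos).mp this
  obtain ⟨v, k, W, hvk, hW, hvc, hWβ, hβW⟩ := exists_isCoprime_of_quartic_two_mul (D := 17)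
    (a := -2) (N := 5) (β := β) hec.of_mul_right_right.symm (by linear_combination -16 * h)
  have h17W : IsCoprime 17 W :=
    IsCoprime.of_isCoprime_of_dvd_right (IsCoprime.mul_right (by norm_num) hβ) hWβ
  obtain ⟨s, t, hst, rfl, hv⟩ := exists_quartic_of_prime prime_five (by norm_num) (by norm_num)
    hvk h17W hW
  have hW' : W ^ 2 = (s ^ 4 - 5 * t ^ 4) ^ 2 := by
    rw [← hW, hv]
    ring
  rcases sq_eq_sq_iff_eq_or_eq_neg.mp hW' with rfl | rfl
  · exact ⟨s, t, v, hst, by rw [hv]; ring, hvc, by linear_combination hβW⟩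
  · exact ⟨s, t, -v, hst, by rw [neg_sq, hv]; ring, by rwa [neg_sq], by linear_combination -hβW⟩

end MordellWeilDescent

namespace JacobiQuartic

section Representation

variable {a b : ℤ} {P P₁ P₂ : JacobiQuartic ℚ a b} {α β Y α₁ β₁ Y₁ α₂ β₂ Y₂ : ℤ}

/-- Integral weighted homogeneous coordinates `(α : β : Y)` of the point `(α / β, Y / β²)`. -/
structure IsRep (P : JacobiQuartic ℚ a b) (α β Y : ℤ) : Prop where
  ne_zero : β ≠ 0
  w_eq : P.w = α / β
  y_eq : P.y = Y / β ^ 2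

theorem IsRep.eqn (h : IsRep P α β Y) : Y ^ 2 = β ^ 4 + a * α ^ 2 * β ^ 2 + b * α ^ 4 := by
  have hβ : (β : ℚ) ≠ 0 := by exact_mod_cast h.ne_zero
  have hP := P.eqn
  rw [h.w_eq, h.y_eq] at hP
  field_simp at hP
  have : (Y : ℚ) ^ 2 = β ^ 4 + a * α ^ 2 * β ^ 2 + b * α ^ 4 := by rw [hP]; ring
  exact_mod_cast this

theorem isRep_of_eqn (hβ : β ≠ 0) (h : Y ^ 2 = β ^ 4 + a * α ^ 2 * β ^ 2 + b * α ^ 4) :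
    ∃ P : JacobiQuartic ℚ a b, IsRep P α β Y := by
  have hβ' : (β : ℚ) ≠ 0 := by exact_mod_cast hβ
  have h' : (Y : ℚ) ^ 2 = β ^ 4 + a * α ^ 2 * β ^ 2 + b * α ^ 4 := by exact_mod_cast h
  refine ⟨⟨α / β, Y / β ^ 2, ?_⟩, hβ, rfl, rfl⟩
  field_simp
  rw [h']
  ring

theorem isRep_num_den (P : JacobiQuartic ℚ a b) :
    IsRep P P.w.num P.w.den (P.y * P.w.den ^ 2).num := by
  have hsq : (P.y * P.w.den ^ 2) ^ 2
      = ((P.w.den ^ 4 + a * P.w.num ^ 2 * P.w.den ^ 2 + b * P.w.num ^ 4 : ℤ) : ℚ) := by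
    push_cast
    rw [← Rat.mul_den_eq_num, mul_pow, P.eqn]
    ring
  obtain ⟨Y, hY⟩ : ∃ Y : ℤ, algebraMap ℤ ℚ Y = P.y * P.w.den ^ 2 :=
    IsIntegrallyClosed.exists_algebraMap_eq_of_isIntegral_pow two_pos
      (hsq ▸ isIntegral_algebraMap)
  refine ⟨by exact_mod_cast P.w.den_ne_zero, by simp [Rat.num_div_den], ?_⟩
  rw [← hY, eq_intCast, Rat.num_intCast, eq_div_iff (pow_ne_zero 2 (by simp))]
  exact hY.symm

/-- The absolute value of the coordinate `Y` of a primitive representation. -/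
def height (P : JacobiQuartic ℚ a b) : ℕ := (P.y * P.w.den ^ 2).num.natAbs

theorem IsRep.height_le (h : IsRep P α β Y) : P.height ≤ Y.natAbs := by
  obtain ⟨d, hd⟩ : (P.w.den : ℤ) ∣ β := by
    rw [h.w_eq]
    exact_mod_cast Rat.den_dvd α β
  have hY : Y = (P.y * P.w.den ^ 2).num * d ^ 2 := by
    have hβ : (β : ℚ) ≠ 0 := by exact_mod_cast h.ne_zero
    have hY := (div_eq_iff (pow_ne_zero 2 hβ)).mp h.y_eq.symm
    have hden : (P.w.den : ℚ) ≠ 0 := by exact_mod_cast P.w.den_ne_zero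
    have hnum := (eq_div_iff (pow_ne_zero 2 (by exact_mod_cast P.w.den_ne_zero))).mp
      P.isRep_num_den.y_eq
    push_cast at hnum
    rw [hd] at hY
    push_cast at hY
    rw [mul_pow, ← mul_assoc, hnum] at hY
    exact_mod_cast hY
  have hd_ne : d ≠ 0 := by
    rintro rfl
    exact h.ne_zero (by simpa using hd)
  rw [height, hY, Int.natAbs_mul]
  exact Nat.le_mul_of_pos_right _ (Int.natAbs_pos.mpr (pow_ne_zero 2 hd_ne))

theorem IsRep.w_eq_w (h₁ : IsRep P₁ α₁ β₁ Y₁) (h₂ : IsRep P₂ α₂ β₂ Y₂) (h : α₁ * β₂ = α₂ * β₁) :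
    P₁.w = P₂.w := by
  rw [h₁.w_eq, h₂.w_eq, div_eq_div_iff (by exact_mod_cast h₁.ne_zero)
    (by exact_mod_cast h₂.ne_zero)]
  exact_mod_cast h

theorem IsRep.neg (h : IsRep P α β Y) : IsRep (-P) (-α) β Y :=
  ⟨h.ne_zero, by rw [neg_w, h.w_eq]; push_cast; ring, h.y_eq⟩

theorem eq_zero_of_w_eq_zero (hy : 0 < P.y) (hw : P.w = 0) : P = 0 :=
  ext_of_sign hw (by rw [sign_pos hy, zero_y, sign_one])

variable [IsAnisotropic (a : ℚ) b]

theorem IsRep.den_ne_zero (h₁ : IsRep P₁ α₁ β₁ Y₁) (h₂ : IsRep P₂ α₂ β₂ Y₂) :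
    β₁ ^ 2 * β₂ ^ 2 - b * α₁ ^ 2 * α₂ ^ 2 ≠ 0 := by
  have hβ₁ : (β₁ : ℚ) ≠ 0 := by exact_mod_cast h₁.ne_zero
  have hβ₂ : (β₂ : ℚ) ≠ 0 := by exact_mod_cast h₂.ne_zero
  have hden := one_sub_mul_sq_ne_zero (IsAnisotropic.not_isSquare (a : ℚ) (b := (b : ℚ))) P₁.w P₂.w
  rw [h₁.w_eq, h₂.w_eq] at hden
  contrapose! hden
  have : (β₁ : ℚ) ^ 2 * β₂ ^ 2 - b * α₁ ^ 2 * α₂ ^ 2 = 0 := by exact_mod_cast hden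
  field_simp
  rw [this, mul_zero]

theorem IsRep.add (h₁ : IsRep P₁ α₁ β₁ Y₁) (h₂ : IsRep P₂ α₂ β₂ Y₂) :
    IsRep (P₁ + P₂) (α₁ * β₁ * Y₂ + α₂ * β₂ * Y₁) (β₁ ^ 2 * β₂ ^ 2 - b * α₁ ^ 2 * α₂ ^ 2)
      ((β₁ ^ 2 * β₂ ^ 2 + b * α₁ ^ 2 * α₂ ^ 2) * (Y₁ * Y₂ + a * α₁ * β₁ * α₂ * β₂)
        + 2 * b * α₁ * α₂ * β₁ * β₂ * (α₁ ^ 2 * β₂ ^ 2 + α₂ ^ 2 * β₁ ^ 2)) := by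
  have hβ₁ : (β₁ : ℚ) ≠ 0 := by exact_mod_cast h₁.ne_zero
  have hβ₂ : (β₂ : ℚ) ≠ 0 := by exact_mod_cast h₂.ne_zero
  have hden := h₁.den_ne_zero h₂
  have hden' : (β₁ : ℚ) ^ 2 * β₂ ^ 2 - b * α₁ ^ 2 * α₂ ^ 2 ≠ 0 := by exact_mod_cast hden
  refine ⟨hden, ?_, ?_⟩
  · rw [add_w, h₁.w_eq, h₂.w_eq, h₁.y_eq, h₂.y_eq]
    push_cast
    field_simp
  · rw [add_y, h₁.w_eq, h₂.w_eq, h₁.y_eq, h₂.y_eq]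
    push_cast
    field_simp

theorem height_add_twoTorsion (P : JacobiQuartic ℚ a b) :
    (P + twoTorsion).height = P.height := by
  simp [height, add_twoTorsion_w, add_twoTorsion_y]

end Representation

end JacobiQuartic

/-- The elliptic curve `y² = 1 - 34 w² + 1445 w⁴`. -/
abbrev E : Type := JacobiQuartic ℚ ((-34 : ℤ) : ℚ) ((1445 : ℤ) : ℚ)

namespace E

open JacobiQuartic

instance : IsAnisotropic ((-34 : ℤ) : ℚ) ((1445 : ℤ) : ℚ) where
  not_isSquare := by norm_num
  sq_lt := by norm_num

/-- A generator of the rational points modulo torsion. -/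
def Q : E := ⟨3 / 19, 370 / 361, by norm_num⟩

theorem isRep_Q : IsRep Q 3 19 370 :=
  ⟨by norm_num, by norm_num [Q], by norm_num [Q]⟩

theorem sign_y_Q : SignType.sign Q.y = 1 :=
  sign_pos (by norm_num [Q])

theorem sign_y_add_self (P : E) : SignType.sign (P + P).y = 1 := by
  rw [sign_y_add, ← sign_mul]
  exact sign_pos (mul_self_pos.mpr P.y_ne_zero)

variable {P : E} {α β Y e c s t : ℤ}

theorem not_five_dvd (hst : IsCoprime s (5 * t)) : ¬5 ∣ s :=
  fun hs ↦ prime_five.not_isUnit (hst.isUnit_of_dvd' hs (dvd_mul_right 5 t))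

theorem pow_four_sub_ne_zero (hst : IsCoprime s (5 * t)) : s ^ 4 - 5 * t ^ 4 ≠ 0 :=
  fun h ↦ not_five_dvd hst (prime_five.dvd_of_dvd_pow (n := 4) ⟨t ^ 4, by linarith⟩)

theorem eq_add_self_of_rep {C : ℤ} (hP : 0 < P.y) (hrep : IsRep P (e * c) β Y)
    (hst : IsCoprime s (5 * t)) (hC : C ^ 2 = s ^ 4 - 34 * s ^ 2 * t ^ 2 + 1445 * t ^ 4)
    (hdbl : e * c * (s ^ 4 - 1445 * t ^ 4) = 2 * (s * t) * C * β) :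
    ∃ S : E, IsRep S t s C ∧ P = S + S := by
  have hs : s ≠ 0 := by
    rintro rfl
    exact not_five_dvd hst (dvd_zero 5)
  obtain ⟨S, hS⟩ := isRep_of_eqn (a := -34) (b := 1445) (α := t) hs (by rw [hC]; ring)
  exact ⟨S, hS, ext_of_sign (hrep.w_eq_w (hS.add hS) (by linear_combination hdbl))
    (by rw [sign_y_add_self, sign_pos hP])⟩

theorem doubling_identity {v X W Z : ℤ} (h : 17 * v ^ 2 = s ^ 4 - 2 * s ^ 2 * t ^ 2 + 5 * t ^ 4)
    (hX : X = 5 * t ^ 2 - 9 * s ^ 2) (hW : W = 2 * s * t - 3 * v)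
    (hZ : Z = 34 * v * (9 * s ^ 2 + 5 * t ^ 2) + 24 * s * t * (s ^ 2 - 10 * t ^ 2)) {A B D : ℤ}
    (hA : A = 2 * X * W * Z) (hD : D = X ^ 4 - 1445 * W ^ 4)
    (hB : B = (X ^ 4 + 1445 * W ^ 4) * (Z ^ 2 - 34 * W ^ 2 * X ^ 2) + 4 * 1445 * W ^ 4 * X ^ 4) :
    (370 * A * D - 57 * B) * (s ^ 4 - 5 * t ^ 4)
      = -2 * v * s * t * (361 * D ^ 2 - 13005 * A ^ 2) := by
  subst hX hW hZ hA hB hD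
  grind

theorem abs_le_of_torsor {v : ℤ} (h : 17 * v ^ 2 = s ^ 4 - 2 * s ^ 2 * t ^ 2 + 5 * t ^ 4) :
    |34 * v * (9 * s ^ 2 + 5 * t ^ 2) + 24 * s * t * (s ^ 2 - 10 * t ^ 2)|
      ≤ 250 * (17 * v ^ 2) := by
  have h₁ : (9 * s ^ 2 + 5 * t ^ 2) ^ 2 ≤ 256 * (17 * v ^ 2) := by
    rw [h]
    nlinarith [sq_nonneg (175 * s ^ 2 - 301 * t ^ 2), sq_nonneg (t ^ 2), sq_nonneg (s ^ 2)]
  have h₂ : (s ^ 2 - 10 * t ^ 2) ^ 2 ≤ 26 * (17 * v ^ 2) := by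
    rw [h]
    nlinarith [sq_nonneg (25 * s ^ 2 - 16 * t ^ 2), sq_nonneg (t ^ 2), sq_nonneg (s ^ 2)]
  have h₃ : (s * t) ^ 2 ≤ 17 * v ^ 2 := by
    rw [h]
    nlinarith [sq_nonneg (2 * s ^ 2 - 3 * t ^ 2), sq_nonneg (t ^ 2), sq_nonneg (s ^ 2)]
  rw [abs_le]
  constructor
  · nlinarith [sq_nonneg (4 * v + (9 * s ^ 2 + 5 * t ^ 2)),
      sq_nonneg (5 * (s * t) + (s ^ 2 - 10 * t ^ 2))]
  · nlinarith [sq_nonneg (4 * v - (9 * s ^ 2 + 5 * t ^ 2)),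
      sq_nonneg (5 * (s * t) - (s ^ 2 - 10 * t ^ 2))]

theorem eq_Q_sub_of_rep {v : ℤ} (hP : 0 < P.y) (hrep : IsRep P (e * c) β Y)
    (hst : IsCoprime s (5 * t)) (hv : 17 * v ^ 2 = s ^ 4 - 2 * s ^ 2 * t ^ 2 + 5 * t ^ 4)
    (hdbl : e * c * (s ^ 4 - 5 * t ^ 4) = 2 * (s * t) * v * β) :
    ∃ S : E, (S.height : ℤ) ≤ 250 * (17 * v ^ 2) ∧ P = Q - (S + S) := by
  -- `S = (W / X, Z / X ^ 2)` is the isomorphism from the curve `hv` to `E` that sends the point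
  -- `(s, t, v) = (3, 1, 2)` to `0`.
  set X := 5 * t ^ 2 - 9 * s ^ 2 with hX
  set W := 2 * s * t - 3 * v with hW
  set Z := 34 * v * (9 * s ^ 2 + 5 * t ^ 2) + 24 * s * t * (s ^ 2 - 10 * t ^ 2) with hZ
  have hX_ne : X ≠ 0 := fun h ↦
    not_five_dvd hst (prime_five.dvd_of_dvd_pow (n := 2) ⟨2 * s ^ 2 - t ^ 2, by linarith⟩)
  obtain ⟨S, hS⟩ := isRep_of_eqn (a := -34) (b := 1445) (α := W) (Y := Z) hX_ne (by grind)
  have hheight : (S.height : ℤ) ≤ 250 * (17 * v ^ 2) :=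
    calc (S.height : ℤ) ≤ Z.natAbs := by exact_mod_cast hS.height_le
      _ = |Z| := Int.natCast_natAbs Z
      _ ≤ 250 * (17 * v ^ 2) := abs_le_of_torsor hv
  refine ⟨S, hheight, ext_of_sign ?_ ?_⟩
  · rw [sub_eq_add_neg]
    refine hrep.w_eq_w (isRep_Q.add (hS.add hS).neg) ?_
    refine mul_right_cancel₀ (pow_four_sub_ne_zero hst) ?_
    clear_value X W Z
    linear_combination (361 * (X ^ 4 - 1445 * W ^ 4) ^ 2 - 13005 * (2 * X * W * Z) ^ 2) * hdbl
      + β * doubling_identity hv hX hW hZ rfl rfl rfl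
  · rw [sign_pos hP, sub_eq_add_neg, sign_y_add, sign_y_Q, neg_y, sign_y_add_self, one_mul]

theorem torsor_points_of_small : ∀ s ∈ Finset.Icc (-9 : ℤ) 9, ∀ t ∈ Finset.Icc (-5 : ℤ) 5,
    ∀ v ∈ Finset.Icc (-15 : ℤ) 15, 17 * v ^ 2 = s ^ 4 - 2 * s ^ 2 * t ^ 2 + 5 * t ^ 4 →
    2 * (s * t) * v * 19 = 3 * (s ^ 4 - 5 * t ^ 4) ∨
      2 * (s * t) * v * 19 = -3 * (s ^ 4 - 5 * t ^ 4) := by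
  decide +kernel

theorem eq_Q_or_eq_neg_Q_of_rep {v : ℤ} (hP : 0 < P.y) (hrep : IsRep P (e * c) β Y)
    (hst : IsCoprime s (5 * t)) (hv : 17 * v ^ 2 = s ^ 4 - 2 * s ^ 2 * t ^ 2 + 5 * t ^ 4)
    (hdbl : e * c * (s ^ 4 - 5 * t ^ 4) = 2 * (s * t) * v * β) (hsmall : 17 * v ^ 2 ≤ 4000) :
    P = Q ∨ P = -Q := by
  have hs : s ^ 2 < 10 ^ 2 := by nlinarith [sq_nonneg (s ^ 2 - 5 * t ^ 2)]
  have ht : t ^ 2 < 6 ^ 2 := by nlinarith [sq_nonneg (s ^ 2 - t ^ 2)]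
  have hv' : v ^ 2 < 16 ^ 2 := by linarith
  have hmul : ∀ n : ℤ, 2 * (s * t) * v * 19 = n * (s ^ 4 - 5 * t ^ 4) → e * c * 19 = n * β :=
    fun n hn ↦ mul_right_cancel₀ (pow_four_sub_ne_zero hst)
      (by linear_combination 19 * hdbl + β * hn)
  obtain ⟨hs₁, hs₂⟩ := abs_lt_of_sq_lt_sq' hs (by norm_num)
  obtain ⟨ht₁, ht₂⟩ := abs_lt_of_sq_lt_sq' ht (by norm_num)
  obtain ⟨hv₁, hv₂⟩ := abs_lt_of_sq_lt_sq' hv' (by norm_num)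
  refine (torsor_points_of_small s (Finset.mem_Icc.mpr ⟨by linarith, by linarith⟩) t
    (Finset.mem_Icc.mpr ⟨by linarith, by linarith⟩) v
    (Finset.mem_Icc.mpr ⟨by linarith, by linarith⟩) hv).imp (fun h ↦ ?_) (fun h ↦ ?_)
  · exact ext_of_sign (hrep.w_eq_w isRep_Q (hmul _ h)) (by rw [sign_pos hP, sign_y_Q])
  · exact ext_of_sign (hrep.w_eq_w isRep_Q.neg (hmul _ h))
      (by rw [sign_pos hP, neg_y, sign_y_Q])

theorem exists_height_lt {P : E} (hP : 0 < P.y) (hw : P.w ≠ 0) :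
    P = Q ∨ P = -Q ∨ ∃ S : E, S.height < P.height ∧ (P = S + S ∨ P = Q - (S + S)) := by
  have hrep := P.isRep_num_den
  obtain ⟨e, c, hec, hα, hY, hβ⟩ :=
    exists_first_descent P.w.isCoprime_num_den (by rw [hrep.eqn]; ring)
  rw [hα] at hrep
  have hheight : (P.height : ℤ) = e ^ 4 + 289 * c ^ 4 := by
    have habs := (sq_eq_sq_iff_abs_eq_abs _ _).mp hY
    rwa [abs_of_nonneg (a := e ^ 4 + 289 * c ^ 4) (by positivity), Int.abs_eq_natAbs] at habs
  have hec_ne : e * c ≠ 0 := hα ▸ Rat.num_ne_zero.mpr hw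
  have he : 0 < e ^ 2 := by have := left_ne_zero_of_mul hec_ne; positivity
  have hc : 0 < c ^ 2 := by have := right_ne_zero_of_mul hec_ne; positivity
  rcases hβ with hβ | hβ
  · obtain ⟨s, t, C, hst, hC, hCe, hdbl⟩ := exists_second_descent_one hec hβ
    obtain ⟨S, hS, rfl⟩ := eq_add_self_of_rep hP hrep hst hC hdbl
    have hCabs : |C| ≤ e ^ 2 + 1 := abs_le_of_sq_le_sq (by nlinarith [sq_nonneg (e ^ 2 - 1)])
      (by positivity)
    have hSC : (S.height : ℤ) ≤ |C| := by
      rw [Int.abs_eq_natAbs]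
      exact_mod_cast hS.height_le
    refine Or.inr (Or.inr ⟨S, ?_, Or.inl rfl⟩)
    zify
    nlinarith
  · obtain ⟨s, t, v, hst, hv, hvc, hdbl⟩ := exists_second_descent_two hec hβ
    rcases le_or_gt (17 * v ^ 2) 4000 with hsmall | hlarge
    · rcases eq_Q_or_eq_neg_Q_of_rep hP hrep hst hv hdbl hsmall with h | h
      exacts [Or.inl h, Or.inr (Or.inl h)]
    · obtain ⟨S, hS, hPS⟩ := eq_Q_sub_of_rep hP hrep hst hv hdbl
      refine Or.inr (Or.inr ⟨S, ?_, Or.inr hPS⟩)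
      have hv4 : (v ^ 2) ^ 2 ≤ (4 * c ^ 2) ^ 2 := by gcongr
      zify
      nlinarith

theorem closure_eq_top : AddSubgroup.closure {Q, twoTorsion} = ⊤ := by
  have hQ : Q ∈ AddSubgroup.closure {Q, twoTorsion} :=
    AddSubgroup.subset_closure (Set.mem_insert _ _)
  have hT : twoTorsion ∈ AddSubgroup.closure {Q, twoTorsion} :=
    AddSubgroup.subset_closure (Set.mem_insert_of_mem _ rfl)
  refine (AddSubgroup.eq_top_iff' _).mpr fun P ↦ ?_
  induction hn : P.height using Nat.strong_induction_on generalizing P with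
  | _ n ih =>
    subst hn
    have mem_of_pos : ∀ R : E, R.height = P.height → 0 < R.y →
        R ∈ AddSubgroup.closure {Q, twoTorsion} := by
      intro R hR hy
      rcases eq_or_ne R.w 0 with hw | hw
      · exact eq_zero_of_w_eq_zero hy hw ▸ zero_mem _
      · rcases exists_height_lt hy hw with rfl | rfl | ⟨S, hS, h⟩
        · exact hQ
        · exact neg_mem hQ
        · have hmem := ih _ (hR ▸ hS) S rfl
          rcases h with rfl | rfl
          exacts [add_mem hmem hmem, sub_mem hQ (add_mem hmem hmem)]
    rcases P.y_ne_zero.lt_or_gt with hy | hy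
    · refine (add_mem_cancel_right hT).mp (mem_of_pos (P + twoTorsion) P.height_add_twoTorsion ?_)
      rwa [add_twoTorsion_y, neg_pos]
    · exact mem_of_pos P rfl hy

theorem exists_eq_zsmul_add (P : E) : ∃ m : ℤ, P = m • Q ∨ P = m • Q + twoTorsion := by
  obtain ⟨m, n, rfl⟩ := AddSubgroup.mem_closure_pair.mp (closure_eq_top ▸ AddSubgroup.mem_top P)
  refine ⟨m, ?_⟩
  have h2 : (2 : ℤ) • (twoTorsion : E) = 0 := by rw [two_zsmul, twoTorsion_add_self]
  rcases Int.even_or_odd' n with ⟨k, rfl | rfl⟩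
  · left
    rw [mul_comm, mul_smul, h2, smul_zero, add_zero]
  · right
    rw [add_smul, mul_comm, mul_smul, h2, smul_zero, zero_add, one_smul]

end E

namespace JacobiQuartic

section Reduction

variable {a b : ℤ} {n : ℕ} {P P₁ P₂ : JacobiQuartic ℚ a b} {p p₁ p₂ : ZMod n × ZMod n}

/-- The point `P` is integral at `n` and its coordinates are congruent to `p` modulo `n`. -/
def ReducesTo (P : JacobiQuartic ℚ a b) (p : ZMod n × ZMod n) : Prop :=
  ∃ α β Y : ℤ, IsRep P α β Y ∧ IsUnit (β : ZMod n) ∧ p.1 * β = α ∧ p.2 * β ^ 2 = Y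

/-- The addition law on residue classes, meaningful when its denominator is a unit. -/
def addMod (a b : ℤ) (p₁ p₂ : ZMod n × ZMod n) : ZMod n × ZMod n :=
  ((p₁.1 * p₂.2 + p₁.2 * p₂.1) * (1 - b * p₁.1 ^ 2 * p₂.1 ^ 2)⁻¹,
    ((1 + b * p₁.1 ^ 2 * p₂.1 ^ 2) * (p₁.2 * p₂.2 + a * p₁.1 * p₂.1)
      + 2 * b * p₁.1 * p₂.1 * (p₁.1 ^ 2 + p₂.1 ^ 2)) * (1 - b * p₁.1 ^ 2 * p₂.1 ^ 2)⁻¹ ^ 2)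

/-- The multiples of a residue class under `addMod`. -/
def nsmulMod (a b : ℤ) (p : ZMod n × ZMod n) : ℕ → ZMod n × ZMod n
  | 0 => (0, 1)
  | k + 1 => addMod a b (nsmulMod a b p k) p

theorem reducesTo_zero : ReducesTo (0 : JacobiQuartic ℚ a b) ((0, 1) : ZMod n × ZMod n) :=
  ⟨0, 1, 1, ⟨one_ne_zero, by simp [zero_w], by simp [zero_y]⟩, by simp, by simp, by simp⟩

theorem ReducesTo.neg (h : ReducesTo P p) : ReducesTo (-P) (-p.1, p.2) := by
  obtain ⟨α, β, Y, hrep, hβ, hα, hY⟩ := h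
  exact ⟨-α, β, Y, hrep.neg, hβ, by push_cast; rw [← hα, neg_mul], hY⟩

theorem ReducesTo.of_isRep {α β Y : ℤ} (h : ReducesTo P p) (hrep : IsRep P α β Y)
    (hαβ : IsCoprime α β) : IsUnit (β : ZMod n) ∧ p.1 * β = α ∧ p.2 * β ^ 2 = Y := by
  obtain ⟨α', β', Y', hrep', hβ', hα', hY'⟩ := h
  have hβ_ne : (β : ℚ) ≠ 0 := by exact_mod_cast hrep.ne_zero
  have hβ'_ne : (β' : ℚ) ≠ 0 := by exact_mod_cast hrep'.ne_zero
  have hw : α * β' = α' * β := by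
    have := hrep.w_eq.symm.trans hrep'.w_eq
    rw [div_eq_div_iff hβ_ne hβ'_ne] at this
    exact_mod_cast this
  have hy : Y * β' ^ 2 = Y' * β ^ 2 := by
    have := hrep.y_eq.symm.trans hrep'.y_eq
    rw [div_eq_div_iff (pow_ne_zero 2 hβ_ne) (pow_ne_zero 2 hβ'_ne)] at this
    exact_mod_cast this
  replace hw := congrArg (Int.cast : ℤ → ZMod n) hw
  replace hy := congrArg (Int.cast : ℤ → ZMod n) hy
  push_cast at hw hy
  rw [← hα'] at hw
  rw [← hY'] at hy
  have hα : p.1 * β = α := hβ'.mul_right_cancel (by linear_combination -hw)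
  refine ⟨?_, hα, (hβ'.pow 2).mul_right_cancel (by linear_combination -hy)⟩
  obtain ⟨u, v, huv⟩ := hαβ
  replace huv := congrArg (Int.cast : ℤ → ZMod n) huv
  push_cast at huv
  exact .of_mul_eq_one (u * p.1 + v) (by linear_combination huv + u * hα)

theorem ReducesTo.fst_eq_zero (h : ReducesTo (0 : JacobiQuartic ℚ a b) p) : p.1 = 0 := by
  obtain ⟨α, β, Y, hrep, hβ, hα, -⟩ := h
  have hα0 : α = 0 := by simpa [zero_w, hrep.ne_zero] using hrep.w_eq.symm
  rw [hα0, Int.cast_zero] at hα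
  exact hβ.mul_left_eq_zero.mp hα

variable [IsAnisotropic (a : ℚ) b]

theorem ReducesTo.add (h₁ : ReducesTo P₁ p₁) (h₂ : ReducesTo P₂ p₂)
    (hd : IsUnit (1 - b * p₁.1 ^ 2 * p₂.1 ^ 2)) :
    ReducesTo (P₁ + P₂) (addMod a b p₁ p₂) := by
  obtain ⟨α₁, β₁, Y₁, hrep₁, hβ₁, hα₁, hY₁⟩ := h₁
  obtain ⟨α₂, β₂, Y₂, hrep₂, hβ₂, hα₂, hY₂⟩ := h₂
  have hinv : (1 - b * p₁.1 ^ 2 * p₂.1 ^ 2)⁻¹ * (1 - b * p₁.1 ^ 2 * p₂.1 ^ 2) = 1 :=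
    ZMod.inv_mul_of_unit _ hd
  have hβ : ((β₁ ^ 2 * β₂ ^ 2 - b * α₁ ^ 2 * α₂ ^ 2 : ℤ) : ZMod n)
      = β₁ ^ 2 * β₂ ^ 2 * (1 - b * p₁.1 ^ 2 * p₂.1 ^ 2) := by
    push_cast
    rw [← hα₁, ← hα₂]
    ring
  refine ⟨_, _, _, hrep₁.add hrep₂, ?_, ?_, ?_⟩
  · rw [hβ]
    exact ((hβ₁.pow 2).mul (hβ₂.pow 2)).mul hd
  · rw [hβ]
    push_cast
    rw [← hα₁, ← hα₂, ← hY₁, ← hY₂, addMod]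
    linear_combination (p₁.1 * p₂.2 + p₁.2 * p₂.1) * β₁ ^ 2 * β₂ ^ 2 * hinv
  · rw [hβ]
    push_cast
    rw [← hα₁, ← hα₂, ← hY₁, ← hY₂, addMod]
    generalize (1 - (b : ZMod n) * p₁.1 ^ 2 * p₂.1 ^ 2)⁻¹ = c at hinv ⊢
    generalize 1 - (b : ZMod n) * p₁.1 ^ 2 * p₂.1 ^ 2 = d at hinv ⊢
    linear_combination ((1 + b * p₁.1 ^ 2 * p₂.1 ^ 2) * (p₁.2 * p₂.2 + a * p₁.1 * p₂.1)
      + 2 * b * p₁.1 * p₂.1 * (p₁.1 ^ 2 + p₂.1 ^ 2)) * β₁ ^ 4 * β₂ ^ 4 * (c * d + 1) * hinv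

theorem ReducesTo.add_of_fst_eq_zero {y : ZMod n} (h₁ : ReducesTo P₁ p) (h₂ : ReducesTo P₂ (0, y)) :
    ReducesTo (P₁ + P₂) (p.1 * y, p.2 * y) := by
  have h := h₁.add h₂ (by simp)
  simpa [addMod] using h

theorem ReducesTo.add_twoTorsion (h : ReducesTo P p) : ReducesTo (P + twoTorsion) (-p) := by
  have hT : ReducesTo (twoTorsion : JacobiQuartic ℚ a b) ((0, -1) : ZMod n × ZMod n) :=
    ⟨0, 1, -1, ⟨one_ne_zero, by simp [twoTorsion], by simp [twoTorsion]⟩,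
      by simp, by simp, by simp⟩
  rw [show -p = (p.1 * -1, p.2 * -1) by ext <;> simp]
  exact h.add_of_fst_eq_zero hT

/-- The points reducing to the neutral element modulo `n`. -/
def reductionKernel (a b : ℤ) (n : ℕ) [IsAnisotropic (a : ℚ) b] :
    AddSubgroup (JacobiQuartic ℚ a b) where
  carrier := {P | ReducesTo P ((0, 1) : ZMod n × ZMod n)}
  zero_mem' := reducesTo_zero
  add_mem' h₁ h₂ := by simpa using h₁.add_of_fst_eq_zero h₂
  neg_mem' h := by simpa using h.neg

theorem ReducesTo.add_of_mem_reductionKernel (h₁ : ReducesTo P₁ p)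
    (h₂ : P₂ ∈ reductionKernel a b n) : ReducesTo (P₁ + P₂) p := by
  simpa using h₁.add_of_fst_eq_zero h₂

theorem ReducesTo.odd_nsmul {k : ℕ} (h : ReducesTo P ((0, -1) : ZMod n × ZMod n)) (hk : Odd k) :
    ReducesTo (k • P) ((0, -1) : ZMod n × ZMod n) := by
  obtain ⟨i, rfl⟩ := hk
  have hker : 2 • P ∈ reductionKernel a b n := by
    change ReducesTo (2 • P) ((0, 1) : ZMod n × ZMod n)
    simpa [two_nsmul] using h.add_of_fst_eq_zero h
  rw [add_nsmul, one_nsmul, add_comm, mul_nsmul]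
  exact h.add_of_mem_reductionKernel (nsmul_mem hker i)

theorem ReducesTo.zsmul {N : ℕ} (hP : ReducesTo P p)
    (hunit : ∀ k < N, IsUnit (1 - b * (nsmulMod a b p k).1 ^ 2 * p.1 ^ 2))
    (hN : 0 < N) (horder : nsmulMod a b p N = (0, 1)) (m : ℤ) :
    ReducesTo (m • P) (nsmulMod a b p (m % N).toNat) := by
  have hnsmul : ∀ k ≤ N, ReducesTo (k • P) (nsmulMod a b p k) := by
    intro k
    induction k with
    | zero => exact fun _ ↦ by simpa [nsmulMod] using reducesTo_zero
    | succ k ih =>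
      intro hk
      rw [succ_nsmul]
      exact (ih (by omega)).add hP (hunit k hk)
  have hker : N • P ∈ reductionKernel a b n := by
    have := hnsmul N le_rfl
    rwa [horder] at this
  have hmod : 0 ≤ m % N := Int.emod_nonneg _ (by omega)
  have hlt : m % N < N := Int.emod_lt_of_pos _ (by omega)
  have hm : m • P = (m % N).toNat • P + (m / N) • N • P := by
    rw [← natCast_zsmul, ← natCast_zsmul, Int.toNat_of_nonneg hmod, smul_smul, ← add_smul,
      mul_comm, Int.emod_add_mul_ediv]
  rw [hm]
  exact (hnsmul _ (by omega)).add_of_mem_reductionKernel (zsmul_mem hker _)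

end Reduction

end JacobiQuartic

namespace E

open JacobiQuartic

/-- The multiples of `Q` modulo `n`. -/
def nsmulQMod (n k : ℕ) : ZMod n × ZMod n :=
  nsmulMod (-34) 1445 (3 * 19⁻¹, 370 * 19⁻¹ ^ 2) k

/-- Modulo `n` the multiples of `Q` can be computed by the affine addition law and have period `N`;
invertibility is phrased in the decidable form `u * u⁻¹ = 1`. -/
def IsPeriodMod (n N : ℕ) : Prop :=
  0 < N ∧ (19 * 19⁻¹ : ZMod n) = 1 ∧ nsmulQMod n N = (0, 1) ∧
    ∀ k < N, (1 - 1445 * (nsmulQMod n k).1 ^ 2 * (3 * 19⁻¹) ^ 2)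
      * (1 - 1445 * (nsmulQMod n k).1 ^ 2 * (3 * 19⁻¹) ^ 2)⁻¹ = 1

instance (n N : ℕ) : Decidable (IsPeriodMod n N) := by
  unfold IsPeriodMod
  infer_instance

theorem zsmul_Q_reducesTo {n N : ℕ} (h : IsPeriodMod n N) (m : ℤ) :
    ReducesTo (m • Q) (nsmulQMod n (m % N).toNat) := by
  obtain ⟨hN, h19, hcycle, hden⟩ := h
  have hQ : ReducesTo Q ((3 * 19⁻¹, 370 * 19⁻¹ ^ 2) : ZMod n × ZMod n) := by
    refine ⟨3, 19, 370, isRep_Q, .of_mul_eq_one _ (by simpa using h19), ?_, ?_⟩ <;> push_cast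
    · linear_combination 3 * h19
    · linear_combination 370 * (19 * 19⁻¹ + 1) * h19
  refine hQ.zsmul (fun k hk ↦ ?_) hN hcycle m
  simpa [nsmulQMod] using IsUnit.of_mul_eq_one _ (hden k hk)

variable {n : ℕ} {P : E} {p : ZMod n × ZMod n}

/-- The value of `17 (x³ + 4)`, up to a square, at the residue class of the point `P` related to
`z = x + 2` by `z (1 - 153 w²) = 6 y + 68 w`. -/
def torsorValue (p : ZMod n × ZMod n) : ZMod n :=
  17 * ((6 * p.2 + 68 * p.1 - 2 * (1 - 153 * p.1 ^ 2)) ^ 3 + 4 * (1 - 153 * p.1 ^ 2) ^ 3)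
    * (1 - 153 * p.1 ^ 2)

theorem isSquare_torsorValue (hP : ReducesTo P p) {x : ℚ}
    (hx : (x + 2) * (1 - 153 * P.w ^ 2) = 6 * P.y + 68 * P.w)
    (hsq : IsSquare (17 * (x ^ 3 + 4))) : IsSquare (torsorValue p) := by
  obtain ⟨α, β, Y, hrep, hβ, hα, hY⟩ := hP
  have hβ_ne : (β : ℚ) ≠ 0 := by exact_mod_cast hrep.ne_zero
  have hx' : x * (β ^ 2 - 153 * α ^ 2)
      = 6 * Y + 68 * α * β - 2 * (β ^ 2 - 153 * α ^ 2) := by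
    rw [hrep.w_eq, hrep.y_eq] at hx
    field_simp at hx
    linear_combination hx
  have hint : IsSquare (17 * ((6 * Y + 68 * α * β - 2 * (β ^ 2 - 153 * α ^ 2)) ^ 3
      + 4 * (β ^ 2 - 153 * α ^ 2) ^ 3) * (β ^ 2 - 153 * α ^ 2)) := by
    rw [← Rat.isSquare_intCast_iff]
    push_cast
    rw [← hx']
    obtain ⟨r, hr⟩ := hsq
    exact ⟨r * (β ^ 2 - 153 * α ^ 2) ^ 2, by linear_combination (β ^ 2 - 153 * α ^ 2) ^ 4 * hr⟩
  obtain ⟨k, hk⟩ := hint.map (Int.castRingHom (ZMod n))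
  have hβ8 : (β : ZMod n) ^ 8 * torsorValue p = k * k := by
    simp only [eq_intCast] at hk
    push_cast at hk
    rw [← hα, ← hY] at hk
    rw [torsorValue]
    linear_combination hk
  obtain ⟨u, hu⟩ := hβ
  have huv : (β : ZMod n) * (↑u⁻¹ : ZMod n) = 1 := by rw [← hu, u.mul_inv]
  refine ⟨k * (↑u⁻¹ : ZMod n) ^ 4, ?_⟩
  calc torsorValue p = (β * (↑u⁻¹ : ZMod n)) ^ 8 * torsorValue p := by rw [huv, one_pow, one_mul]
    _ = k * (↑u⁻¹ : ZMod n) ^ 4 * (k * (↑u⁻¹ : ZMod n) ^ 4) := by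
      linear_combination (↑u⁻¹ : ZMod n) ^ 8 * hβ8

theorem even_of_zsmul_Q_eq_zero {m : ℤ} (h : m • Q = 0) : Even m := by
  have hperiod : IsPeriodMod 37 4 := by decide +kernel
  have hodd : ∀ k < 4, k % 2 = 1 → (nsmulQMod 37 k).1 ≠ 0 := by decide +kernel
  by_contra hm
  rw [Int.not_even_iff] at hm
  exact hodd (m % 4).toNat (by omega) (by omega) (h ▸ zsmul_Q_reducesTo hperiod m).fst_eq_zero

theorem not_isSquare_of_mem_torsion_coset {m : ℤ} (hm : Even m) {x : ℚ}
    (hx : (x + 2) * (1 - 153 * (m • Q + twoTorsion).w ^ 2)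
      = 6 * (m • Q + twoTorsion).y + 68 * (m • Q + twoTorsion).w) :
    ¬IsSquare (17 * (x ^ 3 + 4)) := by
  intro hsq
  have hsieve : ∀ {n N : ℕ}, IsPeriodMod n N →
      IsSquare (torsorValue (-nsmulQMod n (m % N).toNat)) := fun h ↦
    isSquare_torsorValue (zsmul_Q_reducesTo h m).add_twoTorsion hx hsq
  have h₁₂ : ∀ k < 12, k % 2 = 0 → k ≠ 6 → ¬IsSquare (torsorValue (-nsmulQMod 1753 k)) := by
    decide +kernel
  have h₈ : ¬IsSquare (torsorValue (-nsmulQMod 433 2)) := by decide +kernel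
  have h₁₈ : ¬IsSquare (torsorValue (-nsmulQMod 47 6)) := by decide +kernel
  have h₇₂ : ∀ k < 72, k = 30 ∨ k = 54 → ¬IsSquare (torsorValue (-nsmulQMod 593 k)) := by
    decide +kernel
  have hm₁₂ : (m % 12).toNat = 6 := by
    by_contra hne
    exact h₁₂ _ (by omega) (by grind) hne (hsieve (N := 12) (by decide +kernel))
  have hm₈ : (m % 8).toNat ≠ 2 := fun h ↦
    h₈ (h ▸ hsieve (n := 433) (N := 8) (by decide +kernel))
  have hm₁₈ : (m % 18).toNat ≠ 6 := fun h ↦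
    h₁₈ (h ▸ hsieve (n := 47) (N := 18) (by decide +kernel))
  have hm₇₂ : ¬((m % 72).toNat = 30 ∨ (m % 72).toNat = 54) := fun h ↦
    h₇₂ _ (by omega) h (hsieve (N := 72) (by decide +kernel))
  omega

end E

section JacobiSymbol

open NumberTheorySymbols

theorem jacobiSym_eq_of_intCast_eq_mul_sq {n : ℕ} {a c β : ℤ} (hβ : IsUnit (β : ZMod n))
    (h : (a : ZMod n) = c * β ^ 2) : J(a | n) = J(c | n) := by
  have hmod : a ≡ c * β ^ 2 [ZMOD n] :=
    (ZMod.intCast_eq_intCast_iff _ _ _).mp (by push_cast; exact h)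
  have hgcd : β.gcd n = 1 :=
    Int.isCoprime_iff_gcd_eq_one.mp ((ZMod.coe_int_isUnit_iff_isCoprime β n).mp hβ).symm
  rw [jacobiSym.mod_left' hmod, jacobiSym.mul_left, jacobiSym.sq_one' hgcd, mul_one]

theorem jacobiSym_eq_one_of_isSquare {n : ℕ} {a : ℤ} (ha : IsUnit (a : ZMod n))
    (hsq : IsSquare (a : ZMod n)) : J(a | n) = 1 := by
  obtain ⟨r, hr⟩ := hsq
  obtain ⟨r, rfl⟩ := ZMod.intCast_surjective r
  rw [hr] at ha
  rw [jacobiSym_eq_of_intCast_eq_mul_sq (isUnit_of_mul_isUnit_left ha) (c := 1)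
    (by rw [hr]; push_cast; ring), jacobiSym.one_left]

theorem jacobiSym_neg_natCast {q n : ℕ} (hq : q % 4 = 3) (hn : Odd n) :
    J(-q | n) = J(n | q) := by
  rw [jacobiSym.neg _ hn]
  rcases Nat.odd_mod_four_iff.mp (Nat.odd_iff.mp hn) with h | h
  · rw [ZMod.χ₄_nat_one_mod_four h, one_mul,
      jacobiSym.quadratic_reciprocity_one_mod_four h (Nat.odd_iff.mpr (by omega))]
  · rw [ZMod.χ₄_nat_three_mod_four h, jacobiSym.quadratic_reciprocity_three_mod_four hq h]
    ring

end JacobiSymbol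

namespace JacobiQuartic

variable {K : Type*} [Field K] [LinearOrder K] [IsStrictOrderedRing K] {a b : K}

/-- The points on the component `y > 0`. -/
def positiveComponent (a b : K) [IsAnisotropic a b] : AddSubgroup (JacobiQuartic K a b) where
  carrier := {P | 0 < P.y}
  zero_mem' := zero_lt_one
  add_mem' {P₁ P₂} h₁ h₂ := by
    simp only [Set.mem_ofPred_eq, ← sign_eq_one_iff] at h₁ h₂ ⊢
    rw [sign_y_add, h₁, h₂, one_mul]
  neg_mem' h := h

end JacobiQuartic

section Coprimality

variable {α β Y : ℤ}

theorem isCoprime_seventeen_mul_of_rep (hαβ : IsCoprime α β)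
    (h : Y ^ 2 = β ^ 4 - 34 * α ^ 2 * β ^ 2 + 1445 * α ^ 4) : IsCoprime Y (17 * α) := by
  have hβ : IsCoprime (β ^ 4) (17 * α) :=
    ((isCoprime_seventeen_of_rep hαβ h).symm.mul_right hαβ.symm).pow_left
  have hY := hβ.add_mul_left_left (85 * α ^ 3 - 2 * α * β ^ 2)
  rw [show β ^ 4 + 17 * α * (85 * α ^ 3 - 2 * α * β ^ 2) = Y ^ 2 by rw [h]; ring] at hY
  exact (IsCoprime.pow_left_iff two_pos).mp hY

theorem isCoprime_of_rep (hαβ : IsCoprime α β)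
    (h : Y ^ 2 = β ^ 4 - 34 * α ^ 2 * β ^ 2 + 1445 * α ^ 4) : IsCoprime Y β := by
  have hY := isCoprime_seventeen_mul_of_rep hαβ h
  refine isCoprime_of_prime_dvd ?_ fun ℓ hℓ hℓY hℓβ ↦ ?_
  · rintro ⟨rfl, rfl⟩
    exact prime_seventeen.not_isUnit (isUnit_of_mul_isUnit_left (isCoprime_zero_left.mp hY))
  · have hdvd : ℓ * ℓ ∣ 5 * (17 * α ^ 2) ^ 2 := by
      obtain ⟨Y', rfl⟩ := hℓY
      obtain ⟨β', rfl⟩ := hℓβ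
      exact ⟨Y' ^ 2 - ℓ ^ 2 * β' ^ 4 + 34 * α ^ 2 * β' ^ 2, by linear_combination -h⟩
    have hcop : IsCoprime ℓ (17 * α ^ 2) := by
      have := hY.of_isCoprime_of_dvd_left hℓY
      exact this.of_mul_right_left.mul_right this.of_mul_right_right.pow_right
    exact hℓ.not_isUnit (prime_five.squarefree ℓ
      ((hcop.pow_right.mul_left hcop.pow_right).dvd_of_dvd_mul_right hdvd))

end Coprimality

namespace E

open JacobiQuartic NumberTheorySymbols

variable {P S : E} {α β Y : ℤ}

theorem add_self_reducesTo {n : ℕ} (hn : Odd n) (hS : IsRep S α β Y) (hαβ : IsCoprime α β)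
    (hY : (n : ℤ) ∣ Y) : ReducesTo (S + S) ((0, -1) : ZMod n × ZMod n) := by
  have heqn : Y ^ 2 = β ^ 4 - 34 * α ^ 2 * β ^ 2 + 1445 * α ^ 4 := by rw [hS.eqn]; ring
  have isUnit_of_isCoprime : ∀ {k : ℤ}, IsCoprime Y k → IsUnit (k : ZMod n) := fun h ↦
    (ZMod.coe_int_isUnit_iff_isCoprime _ n).mpr (h.of_isCoprime_of_dvd_left hY)
  have h17α := isUnit_of_isCoprime (isCoprime_seventeen_mul_of_rep hαβ heqn)
  have hβ := isUnit_of_isCoprime (isCoprime_of_rep hαβ heqn)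
  have h2 : IsUnit (2 : ZMod n) := by
    simpa using (ZMod.isUnit_iff_coprime 2 n).mpr hn.coprime_two_left
  have hY0 : (Y : ZMod n) = 0 := (ZMod.intCast_zmod_eq_zero_iff_dvd Y n).mpr hY
  have hquartic : (0 : ZMod n) = β ^ 4 - 34 * α ^ 2 * β ^ 2 + 1445 * α ^ 4 := by
    have := congrArg (Int.cast : ℤ → ZMod n) heqn
    push_cast at this
    rwa [hY0, zero_pow two_ne_zero] at this
  push_cast at h17α
  refine ⟨_, _, _, hS.add hS, ?_, ?_, ?_⟩ <;> push_cast
  · have hα := isUnit_of_mul_isUnit_right h17α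
    have hunit := ((((h2.mul h2).mul h17α).mul hα).mul (hβ.pow 2)).pow 2
    refine (isUnit_pow_iff two_ne_zero).mp ?_
    convert hunit.neg using 1
    linear_combination (-β ^ 4 - 1445 * α ^ 4 - 34 * α ^ 2 * β ^ 2) * hquartic
  · rw [hY0]
    ring
  · rw [hY0]
    linear_combination (β ^ 4 + 1445 * α ^ 4) * hquartic

theorem jacobiSym_ne_neg_one (hS : IsRep S α β Y) (hαβ : IsCoprime α β) (hY : 0 < Y) {k : ℕ}
    (hk : Odd k) (hP : P = k • (S + S)) {x : ℚ}
    (hx : (x + 2) * (1 - 153 * P.w ^ 2) = 6 * P.y + 68 * P.w)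
    (hsq : IsSquare (17 * (x ^ 3 + 4))) : J(Y | 2159) ≠ -1 := by
  intro hJ
  obtain ⟨N, rfl⟩ := Int.eq_ofNat_of_zero_le hY.le
  obtain ⟨i, n, hn, rfl⟩ := Nat.exists_eq_two_pow_mul_odd (n := N) (by omega)
  have hred := (add_self_reducesTo hn hS hαβ (by simp)).odd_nsmul hk
  rw [← hP] at hred
  -- Modulo `n` the point `P` is `(0, -1)`, so `x = -8` and `17 * (x ^ 3 + 4) = -8636 = -4 * 2159`.
  have hvalue : IsSquare ((-8636 : ℤ) : ZMod n) := by
    have := isSquare_torsorValue hred hx hsq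
    simp only [torsorValue] at this
    push_cast
    convert this using 1
    ring
  have hunit : IsUnit ((-8636 : ℤ) : ZMod n) := by
    have hne : J(((2 ^ i * n : ℕ) : ℤ) | 2159) ≠ 0 := by rw [hJ]; decide
    have hcop : Nat.Coprime (2 ^ i * n) 2159 := by
      rwa [ne_eq, jacobiSym.eq_zero_iff_not_coprime, not_not, Int.gcd_natCast_natCast] at hne
    have h2159 := (ZMod.isUnit_iff_coprime 2159 n).mpr hcop.coprime_mul_left.symm
    have h2 := (ZMod.isUnit_iff_coprime 2 n).mpr hn.coprime_two_left
    convert (h2159.mul (h2.pow 2)).neg using 1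
    norm_num
  have hn_one : J(n | 2159) = 1 := by
    rw [← jacobiSym_neg_natCast (by norm_num) hn, ← jacobiSym_eq_one_of_isSquare hunit hvalue,
      show (-8636 : ℤ) = -(2159 : ℕ) * 4 by norm_num, jacobiSym.mul_left, jacobiSym.at_four hn,
      mul_one]
  have htwo : J(2 | 2159) = 1 := by norm_num
  rw [Nat.cast_mul, jacobiSym.mul_left, hn_one, Nat.cast_pow, jacobiSym.pow_left, Nat.cast_ofNat,
    htwo, one_pow] at hJ
  norm_num at hJ

theorem jacobiSym_eq_neg_one {k : ℤ} (hk : ¬3 ∣ k) (hS : IsRep (k • Q) α β Y)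
    (hαβ : IsCoprime α β) : J(Y | 2159) = -1 := by
  have h17 : J(Y | 17) = 1 := by
    have heqn : Y ^ 2 = β ^ 4 - 34 * α ^ 2 * β ^ 2 + 1445 * α ^ 4 := by rw [hS.eqn]; ring
    have hβ : IsUnit (β : ZMod 17) := (ZMod.coe_int_isUnit_iff_isCoprime β 17).mpr
      (isCoprime_seventeen_of_rep hαβ heqn)
    have hdvd : 17 ∣ (Y - β ^ 2) * (Y + β ^ 2) :=
      ⟨85 * α ^ 4 - 2 * α ^ 2 * β ^ 2, by linear_combination heqn⟩
    rcases prime_seventeen.dvd_or_dvd hdvd with h | h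
    · rw [jacobiSym_eq_of_intCast_eq_mul_sq (c := 1) hβ, jacobiSym.one_left]
      have := (ZMod.intCast_zmod_eq_zero_iff_dvd _ 17).mpr h
      push_cast at this ⊢
      linear_combination this
    · rw [jacobiSym_eq_of_intCast_eq_mul_sq (c := -1) hβ]
      · norm_num
      · have := (ZMod.intCast_zmod_eq_zero_iff_dvd _ 17).mpr h
        push_cast at this ⊢
        linear_combination this
  have h127 : J(Y | 127) = -1 := by
    have hperiod : IsPeriodMod 127 3 := by decide +kernel
    have hy : ∀ k < 3, k ≠ 0 → (nsmulQMod 127 k).2 = 45 := by decide +kernel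
    obtain ⟨hβ, -, hY⟩ := (zsmul_Q_reducesTo hperiod k).of_isRep hS hαβ
    rw [hy _ (by omega) (by omega)] at hY
    rw [jacobiSym_eq_of_intCast_eq_mul_sq (c := 45) hβ (by exact_mod_cast hY.symm)]
    norm_num
  rw [show 2159 = 17 * 127 by norm_num, jacobiSym.mul_right, h17, h127, one_mul]

theorem zsmul_Q_y_pos (m : ℤ) : 0 < (m • Q).y := by
  have hQ : Q ∈ positiveComponent _ _ := sign_eq_one_iff.mp sign_y_Q
  exact zsmul_mem hQ m

theorem eq_four_of_even_zsmul {m : ℤ} (hm : Even m) {x : ℚ}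
    (hx : (x + 2) * (1 - 153 * (m • Q).w ^ 2) = 6 * (m • Q).y + 68 * (m • Q).w)
    (hsq : IsSquare (17 * (x ^ 3 + 4))) : x = 4 := by
  obtain ⟨k, rfl⟩ := hm
  rcases eq_or_ne k 0 with rfl | hk
  · rw [add_zero, zero_smul, zero_w, zero_y] at hx
    linarith
  obtain ⟨k', hk', h3⟩ := (Int.finiteMultiplicity_iff.mpr
    ⟨by decide, hk⟩ : FiniteMultiplicity (3 : ℤ) k).exists_eq_pow_mul_and_not_dvd
  set j := multiplicity 3 k
  have hP : (k + k) • Q = 3 ^ j • (k' • Q + k' • Q) := by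
    rw [← natCast_zsmul, hk']
    push_cast
    module
  have hrep := (k' • Q).isRep_num_den
  have hcop := (k' • Q).w.isCoprime_num_den
  have hpos : 0 < (k' • Q).y := zsmul_Q_y_pos k'
  have hY : 0 < ((k' • Q).y * (k' • Q).w.den ^ 2).num :=
    Rat.num_pos.mpr (mul_pos hpos (pow_pos (by exact_mod_cast (k' • Q).w.den_pos) 2))
  exact (jacobiSym_ne_neg_one hrep hcop hY (Odd.pow (by decide)) hP hx hsq
    (jacobiSym_eq_neg_one h3 hrep hcop)).elim

end E

namespace E

open JacobiQuartic

section Torsor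

variable {z v : ℚ}

theorem twenty_sub_ne_zero (z : ℚ) : 20 - 9 * z ^ 2 ≠ 0 := by
  intro h
  have hsq : IsSquare (5 : ℚ) := ⟨3 * z / 2, by linear_combination h / 4⟩
  norm_num at hsq

theorem eqn_of_torsor {w y : ℚ} (hv : 17 * v ^ 2 = z ^ 4 - 8 * z ^ 2 + 80)
    (hw : w * (20 - 9 * z ^ 2) = 4 * z - 3 * v) (hy : 6 * y = z * (1 - 153 * w ^ 2) - 68 * w) :
    y ^ 2 = 1 - 34 * w ^ 2 + 1445 * w ^ 4 := by
  have hconic : 17 * (9 * z ^ 2 - 20) * w ^ 2 + 136 * z * w = z ^ 2 - 36 := by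
    refine mul_left_cancel₀ (twenty_sub_ne_zero z) ?_
    linear_combination (-17 * (w * (20 - 9 * z ^ 2) + 4 * z - 3 * v) + 136 * z) * hw - 9 * hv
  grind

section Pair

variable {w₁ y₁ w₂ y₂ : ℚ} (hv : 17 * v ^ 2 = z ^ 4 - 8 * z ^ 2 + 80)
  (hw₁ : w₁ * (20 - 9 * z ^ 2) = 4 * z - 3 * v) (hw₂ : w₂ * (20 - 9 * z ^ 2) = 4 * z + 3 * v)
  (hy₁ : 6 * y₁ = z * (1 - 153 * w₁ ^ 2) - 68 * w₁)
  (hy₂ : 6 * y₂ = z * (1 - 153 * w₂ ^ 2) - 68 * w₂)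

include hv hw₁ hw₂

theorem mul_of_torsor : 17 * (w₁ * w₂) * (20 - 9 * z ^ 2) = z ^ 2 - 36 := by
  refine mul_left_cancel₀ (twenty_sub_ne_zero z) ?_
  linear_combination 17 * (w₂ * (20 - 9 * z ^ 2)) * hw₁ + 17 * (4 * z - 3 * v) * hw₂ - 9 * hv

include hy₁ hy₂

theorem add_w_of_torsor :
    (w₁ * y₂ + y₁ * w₂) * 19 = -3 * (1 - 1445 * w₁ ^ 2 * w₂ ^ 2) := by
  have hD := twenty_sub_ne_zero z
  have hprod := mul_of_torsor hv hw₁ hw₂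
  have hsum : (w₁ + w₂) * (20 - 9 * z ^ 2) = 8 * z := by linear_combination hw₁ + hw₂
  have h6 : 6 * (w₁ * y₂ + y₁ * w₂)
      = (w₁ + w₂) * z * (1 - 153 * (w₁ * w₂)) - 136 * (w₁ * w₂) := by
    linear_combination w₁ * hy₂ + w₂ * hy₁
  clear hv hw₁ hw₂ hy₁ hy₂
  grind

theorem y_mul_neg_of_torsor : y₁ * y₂ < 0 := by
  have hD := twenty_sub_ne_zero z
  have hprod := mul_of_torsor hv hw₁ hw₂
  have hsum : (w₁ + w₂) * (20 - 9 * z ^ 2) = 8 * z := by linear_combination hw₁ + hw₂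
  have h36 : 36 * (y₁ * y₂)
      = z ^ 2 * (1 - 153 * ((w₁ + w₂) ^ 2 - 2 * (w₁ * w₂)) + 153 ^ 2 * (w₁ * w₂) ^ 2)
      - 68 * z * (w₁ + w₂) * (1 - 153 * (w₁ * w₂)) + 68 ^ 2 * (w₁ * w₂) := by
    linear_combination 6 * y₂ * hy₁ + (z * (1 - 153 * w₁ ^ 2) - 68 * w₁) * hy₂
  have h81 : 81 * (y₁ * y₂) * (20 - 9 * z ^ 2) ^ 2
      = -(68 * (20 - 9 * z ^ 2) ^ 2 - 3008 * (20 - 9 * z ^ 2) + 473600) := by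
    clear hv hw₁ hw₂ hy₁ hy₂
    grind
  nlinarith [sq_nonneg (20 - 9 * z ^ 2 - 20), sq_nonneg (20 - 9 * z ^ 2)]

end Pair

/-- The function `(6 y + 68 w) / (1 - 153 w²)` on `E` has degree two, so the two points over a value
`z` have a constant sum; they are rational because the discriminant is a square by `hv`. -/
theorem exists_add_eq_of_torsor (hv : 17 * v ^ 2 = z ^ 4 - 8 * z ^ 2 + 80) :
    ∃ P₁ P₂ : E, P₁ + P₂ = Q + twoTorsion ∧
      z * (1 - 153 * P₁.w ^ 2) = 6 * P₁.y + 68 * P₁.w ∧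
      z * (1 - 153 * P₂.w ^ 2) = 6 * P₂.y + 68 * P₂.w := by
  have hD := twenty_sub_ne_zero z
  obtain ⟨w₁, hw₁⟩ : ∃ w, w * (20 - 9 * z ^ 2) = 4 * z - 3 * v := ⟨_, div_mul_cancel₀ _ hD⟩
  obtain ⟨w₂, hw₂⟩ : ∃ w, w * (20 - 9 * z ^ 2) = 4 * z + 3 * v := ⟨_, div_mul_cancel₀ _ hD⟩
  obtain ⟨y₁, hy₁⟩ : ∃ y, 6 * y = z * (1 - 153 * w₁ ^ 2) - 68 * w₁ :=
    ⟨_, mul_div_cancel₀ _ (by norm_num)⟩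
  obtain ⟨y₂, hy₂⟩ : ∃ y, 6 * y = z * (1 - 153 * w₂ ^ 2) - 68 * w₂ :=
    ⟨_, mul_div_cancel₀ _ (by norm_num)⟩
  have heqn₁ := eqn_of_torsor hv hw₁ hy₁
  have heqn₂ := eqn_of_torsor (v := -v) (by rw [neg_sq, hv]) (by linear_combination hw₂) hy₂
  refine ⟨⟨w₁, y₁, by push_cast; linear_combination heqn₁⟩,
    ⟨w₂, y₂, by push_cast; linear_combination heqn₂⟩, ext_of_sign ?_ ?_, ?_, ?_⟩
  · have hden := one_sub_mul_sq_ne_zero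
      (IsAnisotropic.not_isSquare ((-34 : ℤ) : ℚ) (b := ((1445 : ℤ) : ℚ))) w₁ w₂
    have hadd := add_w_of_torsor hv hw₁ hw₂ hy₁ hy₂
    rw [add_w, add_twoTorsion_w, div_eq_iff hden]
    push_cast [Q]
    linear_combination hadd / 19
  · rw [sign_y_add, ← sign_mul, sign_neg (y_mul_neg_of_torsor hv hw₁ hw₂ hy₁ hy₂),
      add_twoTorsion_y, Left.sign_neg, sign_y_Q]
  · linear_combination -hy₁
  · linear_combination -hy₂

end Torsor

theorem eq_four_of_mem_coset {P : E} {m : ℤ} (hm : Even m)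
    (hP : P = m • Q ∨ P = m • Q + twoTorsion) {x : ℚ}
    (hx : (x + 2) * (1 - 153 * P.w ^ 2) = 6 * P.y + 68 * P.w)
    (hsq : IsSquare (17 * (x ^ 3 + 4))) : x = 4 := by
  rcases hP with rfl | rfl
  · exact eq_four_of_even_zsmul hm hx hsq
  · exact (not_isSquare_of_mem_torsion_coset hm hx hsq).elim

theorem even_or_even_of_add_eq {P₁ P₂ : E} {m₁ m₂ : ℤ} (h : P₁ + P₂ = Q + twoTorsion)
    (h₁ : P₁ = m₁ • Q ∨ P₁ = m₁ • Q + twoTorsion) (h₂ : P₂ = m₂ • Q ∨ P₂ = m₂ • Q + twoTorsion) :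
    Even m₁ ∨ Even m₂ := by
  have hT : (twoTorsion : E) + twoTorsion = 0 := twoTorsion_add_self
  have hm : (m₁ + m₂ - 1) • Q = P₁ + P₂ - Q ∨ (m₁ + m₂ - 1) • Q = P₁ + P₂ - Q + twoTorsion := by
    rcases h₁ with rfl | rfl <;> rcases h₂ with rfl | rfl
    · left; module
    · right; rw [← add_zero ((m₁ + m₂ - 1) • Q), ← hT]; module
    · right; rw [← add_zero ((m₁ + m₂ - 1) • Q), ← hT]; module
    · left; rw [← add_zero ((m₁ + m₂ - 1) • Q), ← hT]; module
  have hpos := zsmul_Q_y_pos (m₁ + m₂ - 1)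
  rcases hm with hm | hm
  · rw [hm, h, add_sub_cancel_left] at hpos
    exact absurd hpos (by norm_num [twoTorsion])
  · rw [h, add_sub_cancel_left, hT] at hm
    have := even_of_zsmul_Q_eq_zero hm
    by_contra! hodd
    grind

theorem eq_four_of_torsor {x v : ℚ} (hv : 17 * v ^ 2 = x ^ 4 + 8 * x ^ 3 + 16 * x ^ 2 + 64)
    (hsq : IsSquare (17 * (x ^ 3 + 4))) : x = 4 := by
  obtain ⟨P₁, P₂, hadd, hx₁, hx₂⟩ := exists_add_eq_of_torsor (z := x + 2) (v := v)
    (by linear_combination hv)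
  obtain ⟨m₁, hP₁⟩ := exists_eq_zsmul_add P₁
  obtain ⟨m₂, hP₂⟩ := exists_eq_zsmul_add P₂
  rcases even_or_even_of_add_eq hadd hP₁ hP₂ with hm | hm
  · exact eq_four_of_mem_coset hm hP₁ hx₁ hsq
  · exact eq_four_of_mem_coset hm hP₂ hx₂ hsq

end E

section Splitting

theorem exists_squarefree_mul_sq_of_mul_eq_sq {f g k : ℤ} (hg : 0 < g) (h : f * g = k ^ 2) :
    ∃ (s : ℕ) (u v : ℤ), Squarefree s ∧ f = s * u ^ 2 ∧ g = s * v ^ 2 := by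
  lift g to ℕ using hg.le
  obtain ⟨s, v, rfl, hs⟩ := Nat.sq_mul_squarefree g
  have hsv : s ≠ 0 ∧ v ≠ 0 := by
    constructor <;> rintro rfl <;> simp at hg
  have hv : (v : ℤ) ≠ 0 := mod_cast hsv.2
  obtain ⟨t, rfl⟩ : (v : ℤ) ∣ k :=
    (Int.pow_dvd_pow_iff two_ne_zero).mp ⟨f * s, by rw [← h]; push_cast; ring⟩
  have hfs : f * s = t ^ 2 := by
    refine mul_left_cancel₀ (pow_ne_zero 2 hv) ?_
    push_cast at h
    linear_combination h
  obtain ⟨u, rfl⟩ : (s : ℤ) ∣ t :=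
    ((Int.squarefree_natCast.mpr hs).dvd_pow_iff_dvd two_ne_zero).mp ⟨f, by rw [← hfs, mul_comm]⟩
  refine ⟨s, u, v, hs, ?_, by push_cast; ring⟩
  refine mul_right_cancel₀ (b := (s : ℤ)) (mod_cast hsv.1) ?_
  linear_combination hfs

variable {a c s u v : ℤ}

theorem dvd_of_dvd_cubic_of_dvd_quartic (hac : IsCoprime a c) (hf : s ∣ c * (a ^ 3 + 4 * c ^ 3))
    (hg : s ∣ (a ^ 2 + 4 * a * c) ^ 2 + 64 * c ^ 4) : s ∣ 34 ^ 4 := by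
  have hsc : IsCoprime s c := by
    refine IsCoprime.of_isCoprime_of_dvd_left ?_ hg
    rw [show (a ^ 2 + 4 * a * c) ^ 2 + 64 * c ^ 4
      = a ^ 4 + c * (8 * a ^ 3 + 16 * a ^ 2 * c + 64 * c ^ 3) by ring]
    exact hac.pow_left.add_mul_left_left _
  -- The two factors have resultant `2 ^ 8 * 17 ^ 2`.
  have hres : (388 * c ^ 3 + 896 * a * c ^ 2 + 304 * a ^ 2 * c + 31 * a ^ 3)
        * (a ^ 3 + 4 * c ^ 3)
      + (48 * c ^ 2 - 56 * a * c - 31 * a ^ 2) * ((a ^ 2 + 4 * a * c) ^ 2 + 64 * c ^ 4)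
      = 4624 * c ^ 6 := by ring
  have hdvd : s ∣ c ^ 6 * 4624 := by
    rw [mul_comm, ← hres]
    exact dvd_add ((hsc.dvd_of_dvd_mul_left hf).mul_left _) (hg.mul_left _)
  exact (hsc.pow_right.dvd_of_dvd_mul_left hdvd).trans (by norm_num)

theorem cubic_ne_two_mul_odd_mul_sq (hac : IsCoprime a c) (hs : Odd s)
    (hg : 2 ∣ (a ^ 2 + 4 * a * c) ^ 2 + 64 * c ^ 4) :
    c * (a ^ 3 + 4 * c ^ 3) ≠ 2 * s * u ^ 2 := by
  intro hf
  obtain ⟨b, rfl⟩ : 2 ∣ a := by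
    rw [← even_iff_two_dvd] at hg ⊢
    simpa [parity_simps, show Even (64 : ℤ) by decide, show Even (4 : ℤ) by decide] using hg
  have hc : Odd c := by
    rw [← Int.not_even_iff_odd, even_iff_two_dvd]
    intro h2
    exact absurd (hac.isUnit_of_dvd' (dvd_mul_right 2 b) h2) (by decide)
  obtain ⟨t, rfl⟩ : 2 ∣ u := by
    have h : Even (s * u ^ 2) := ⟨c * (2 * b ^ 3 + c ^ 3), by linarith⟩
    rw [← even_iff_two_dvd]
    simpa [parity_simps, Int.not_even_iff_odd.mpr hs] using h
  have h : Odd (c * (2 * b ^ 3 + c ^ 3)) := hc.mul ((even_two_mul _).add_odd hc.pow)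
  rw [show c * (2 * b ^ 3 + c ^ 3) = 2 * (s * t ^ 2) by linarith] at h
  exact Int.not_even_iff_odd.mpr h (even_two_mul _)

theorem exists_eq_mul_sq_of_cubic_mul_quartic_eq_sq {k : ℤ} (hac : IsCoprime a c) (hc : c ≠ 0)
    (h : c * (a ^ 3 + 4 * c ^ 3) * ((a ^ 2 + 4 * a * c) ^ 2 + 64 * c ^ 4) = k ^ 2) :
    ∃ s u v : ℤ, (s = 1 ∨ s = 17) ∧ c * (a ^ 3 + 4 * c ^ 3) = s * u ^ 2 ∧
      (a ^ 2 + 4 * a * c) ^ 2 + 64 * c ^ 4 = s * v ^ 2 := by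
  obtain ⟨s, u, v, hs, hf, hg⟩ := exists_squarefree_mul_sq_of_mul_eq_sq (by positivity) h
  have hs34 : s ∣ 34 := by
    rw [← hs.dvd_pow_iff_dvd four_ne_zero]
    exact mod_cast dvd_of_dvd_cubic_of_dvd_quartic hac ⟨u ^ 2, hf⟩ ⟨v ^ 2, hg⟩
  have hmem : s ∈ Nat.divisors 34 := Nat.mem_divisors.mpr ⟨hs34, by norm_num⟩
  rw [show Nat.divisors 34 = {1, 2, 17, 34} by decide] at hmem
  simp only [Finset.mem_insert, Finset.mem_singleton] at hmem
  rcases hmem with rfl | rfl | rfl | rfl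
  · exact ⟨1, u, v, .inl rfl, mod_cast hf, mod_cast hg⟩
  · refine absurd ?_ (cubic_ne_two_mul_odd_mul_sq (s := 1) (u := u) hac odd_one
      ⟨v ^ 2, mod_cast hg⟩)
    exact mod_cast hf
  · exact ⟨17, u, v, .inr rfl, mod_cast hf, mod_cast hg⟩
  · refine absurd ?_ (cubic_ne_two_mul_odd_mul_sq (s := 17) (u := u) hac (by decide)
      ⟨17 * v ^ 2, ?_⟩)
    · rw [hf]; push_cast; ring
    · rw [hg]; push_cast; ring

theorem isSquare_or_isSquare_seventeen_mul {x y : ℚ}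
    (h : y ^ 2 = (x ^ 3 + 4) * (x ^ 4 + 8 * x ^ 3 + 16 * x ^ 2 + 64)) :
    ∃ s : ℚ, (s = 1 ∨ s = 17) ∧ IsSquare (s * (x ^ 3 + 4)) ∧
      IsSquare (s * (x ^ 4 + 8 * x ^ 3 + 16 * x ^ 2 + 64)) := by
  have hc : (x.den : ℚ) ≠ 0 := mod_cast x.den_nz
  have hx : x * x.den = x.num := Rat.mul_den_eq_num x
  obtain ⟨k, hk⟩ : IsSquare ((x.den : ℤ) * (x.num ^ 3 + 4 * x.den ^ 3)
      * ((x.num ^ 2 + 4 * x.num * x.den) ^ 2 + 64 * x.den ^ 4)) := by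
    rw [← Rat.isSquare_intCast_iff]
    refine ⟨y * x.den ^ 4, ?_⟩
    push_cast
    rw [← hx]
    linear_combination -(x.den : ℚ) ^ 8 * h
  rw [← sq] at hk
  obtain ⟨s, u, v, hs, hf, hg⟩ := exists_eq_mul_sq_of_cubic_mul_quartic_eq_sq
    (Rat.isCoprime_num_den x) (mod_cast x.den_nz) hk
  qify at hf hg
  rw [← hx] at hf hg
  refine ⟨s, mod_cast hs, ⟨s * u / x.den ^ 2, ?_⟩, ⟨s * v / x.den ^ 2, ?_⟩⟩
  · field_simp
    linear_combination s * hf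
  · field_simp
    linear_combination s * hg

end Splitting

theorem eq_zero_or_eq_four {x y : ℚ}
    (h : y ^ 2 = (x ^ 3 + 4) * (x ^ 4 + 8 * x ^ 3 + 16 * x ^ 2 + 64)) : x = 0 ∨ x = 4 := by
  obtain ⟨s, rfl | rfl, hf, hg⟩ := isSquare_or_isSquare_seventeen_mul h
  · left
    have hr : ((x + 2) / 2) ^ 2 = 1 := by
      obtain ⟨t, ht⟩ := hg
      exact sq_eq_one_of_quartic_isSquare ⟨t / 4, by linear_combination ht / 16⟩
    have hx : x = 0 ∨ x = -4 := by
      rw [← add_eq_zero_iff_eq_neg, ← mul_eq_zero]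
      linear_combination 4 * hr
    refine hx.resolve_right ?_
    rintro rfl
    exact absurd hf.nonneg (by norm_num)
  · right
    obtain ⟨t, ht⟩ := hg
    exact E.eq_four_of_torsor (v := t / 17) (by linear_combination -ht / 17) hf

/-- The affine rational points of the hyperelliptic curve
`y² = (x³ + 4)(x⁴ + 8x³ + 16x² + 64)` are exactly `(0, ±16)` and `(4, ±272)`. -/
theorem genus3_curve_points (x y : ℚ) :
    y ^ 2 = (x ^ 3 + 4) * (x ^ 4 + 8 * x ^ 3 + 16 * x ^ 2 + 64) ↔
    (x = 0 ∧ y = 16) ∨ (x = 0 ∧ y = -16) ∨ (x = 4 ∧ y = 272) ∨ (x = 4 ∧ y = -272) := by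
  constructor
  · intro h
    rcases eq_zero_or_eq_four h with rfl | rfl
    · have hy : y = 16 ∨ y = -16 := sq_eq_sq_iff_eq_or_eq_neg.mp (by rw [h]; norm_num)
      tauto
    · have hy : y = 272 ∨ y = -272 := sq_eq_sq_iff_eq_or_eq_neg.mp (by rw [h]; norm_num)
      tauto
  · rintro (⟨rfl, rfl⟩ | ⟨rfl, rfl⟩ | ⟨rfl, rfl⟩ | ⟨rfl, rfl⟩) <;> norm_num
end

section
/- The set of pairs (x,y) ∈ ℚ × ℚ satisfying y² = (x⁴ − 1)(x² − 2x − 1)(x⁸ − 8x⁵ + 2x⁴ + 8x³ + 1) is exactly {(1, 0), (−1, 0), (0, 1), (0, −1)}. -/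
/-!
At `x = a / b` in lowest terms the right-hand side is, up to the square `b ^ 14`, the product of the
three binary forms `a ^ 4 - b ^ 4`, `quadForm a b` and `octicForm a b`. Eliminating `a` between
pairs of these forms shows that the only primes dividing two of them are `2`, `5` and `17`. The
prime `5` is harmless because `quadForm` is anisotropic modulo `5`, so `quadForm a b = d * s ^ 2`
with `d ∣ 2`. Such a `d` is a square modulo `17`, whereas `quadForm a b` is not one if `17` divides
both `a ^ 4 - b ^ 4` and one of the other two forms; hence also `a ^ 4 - b ^ 4 = d * c ^ 2` with
`d ∣ 2`. For each of the four values of `d` this equation has only trivial solutions, by Fermat's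
infinite descent.
-/

theorem exists_squarefree_mul_sq_eq (m : ℤ) : ∃ d s : ℤ, Squarefree d ∧ m = d * s ^ 2 := by
  obtain ⟨d, s, hm, hd⟩ := Nat.sq_mul_squarefree m.natAbs
  have hm' : (m.natAbs : ℤ) = d * s ^ 2 := by rw [← hm]; push_cast; ring
  obtain h | h := m.natAbs_eq
  · exact ⟨d, s, Int.squarefree_natCast.2 hd, by rw [h, hm']⟩
  · exact ⟨-d, s, by simpa [← Int.squarefree_natAbs] using hd, by rw [h, hm', neg_mul]⟩

theorem exists_squarefree_dvd_of_isSquare_mul {m n : ℤ} (h : IsSquare (m * n)) :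
    ∃ d s : ℤ, Squarefree d ∧ d ∣ n ∧ m = d * s ^ 2 := by
  obtain ⟨d, s, hd, rfl⟩ := exists_squarefree_mul_sq_eq m
  obtain rfl | hs := eq_or_ne s 0
  · exact ⟨1, 0, squarefree_one, one_dvd n, by ring⟩
  obtain ⟨r, hr⟩ := h
  obtain ⟨t, rfl⟩ : s ∣ r := (Int.pow_dvd_pow_iff two_ne_zero).1 ⟨d * n, by linear_combination -hr⟩
  have hdn : d * n = t ^ 2 := mul_left_cancel₀ (pow_ne_zero 2 hs) (by linear_combination hr)
  obtain ⟨u, rfl⟩ : d ∣ t := (hd.dvd_pow_iff_dvd two_ne_zero).1 ⟨n, hdn.symm⟩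
  exact ⟨d, s, hd, ⟨u ^ 2, mul_left_cancel₀ hd.ne_zero (by linear_combination hdn)⟩, rfl⟩

theorem exists_eq_sq_of_isCoprime_of_mul_eq_sq {m n c : ℤ} (hm : 0 ≤ m) (hmn : IsCoprime m n)
    (h : m * n = c ^ 2) : ∃ s, m = s ^ 2 := by
  obtain ⟨s, hs | hs⟩ := Int.sq_of_isCoprime hmn h
  · exact ⟨s, hs⟩
  · exact ⟨0, by nlinarith [sq_nonneg s]⟩

theorem exists_eq_sq_eq_two_mul_sq_of_two_mul_mul_eq_sq {u v t : ℤ} (hu : 0 ≤ u) (hv : 0 ≤ v)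
    (hv2 : Even v) (huv : IsCoprime u v) (h : 2 * u * v = t ^ 2) :
    ∃ i j, u = i ^ 2 ∧ v = 2 * j ^ 2 := by
  obtain ⟨w, rfl⟩ := hv2.two_dvd
  obtain ⟨r, rfl⟩ : (2 : ℤ) ∣ t := Int.prime_two.dvd_of_dvd_pow ⟨u * (2 * w), by rw [← h]; ring⟩
  have huw : IsCoprime u w := huv.of_mul_right_right
  have hr : u * w = r ^ 2 := by linarith
  obtain ⟨i, hi⟩ := exists_eq_sq_of_isCoprime_of_mul_eq_sq hu huw hr
  obtain ⟨j, hj⟩ := exists_eq_sq_of_isCoprime_of_mul_eq_sq (by lia) huw.symm (mul_comm u w ▸ hr)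
  exact ⟨i, j, hi, by rw [hj]⟩

theorem exists_sq_add_pow_four_eq_pow_four {x y z : ℤ} (hx : Odd x) (hy : y ≠ 0)
    (hxy : IsCoprime x y) (h : x ^ 4 + 4 * y ^ 4 = z ^ 2) :
    ∃ s t : ℤ, t ≠ 0 ∧ s.natAbs < z.natAbs ∧ IsCoprime x t ∧ x ^ 2 + t ^ 4 = s ^ 4 := by
  have hz : 0 < |z| := abs_pos.2 <| by
    rintro rfl
    have : 0 < x ^ 4 + 4 * y ^ 4 := by positivity
    linarith
  have triple : PythagoreanTriple (x ^ 2) (2 * y ^ 2) |z| := by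
    unfold PythagoreanTriple
    linear_combination h - sq_abs z
  have hcop : IsCoprime (x ^ 2) (2 * y ^ 2) :=
    (Int.isCoprime_two_right.2 hx).pow_left.mul_right hxy.pow
  obtain ⟨m, n, hxmn, hymn, hzmn, hmn, -, hm⟩ := triple.coprime_classification'
    (Int.isCoprime_iff_gcd_eq_one.1 hcop) (Int.odd_iff.1 hx.pow) hz
  rw [← Int.isCoprime_iff_gcd_eq_one] at hmn
  have hmn_sq : m * n = y ^ 2 := by linarith
  have hn : 0 < n := pos_of_mul_pos_right (hmn_sq ▸ by positivity) hm
  obtain ⟨s, rfl⟩ := exists_eq_sq_of_isCoprime_of_mul_eq_sq hm hmn hmn_sq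
  obtain ⟨t, rfl⟩ := exists_eq_sq_of_isCoprime_of_mul_eq_sq hn.le hmn.symm (mul_comm n _ ▸ hmn_sq)
  have hst : x ^ 2 + t ^ 4 = s ^ 4 := by linear_combination hxmn
  have hsz : |s| < |z| := calc
    |s| ≤ s ^ 2 := s.natCast_natAbs ▸ Int.natAbs_le_self_sq s
    _ ≤ (s ^ 2) ^ 2 := Int.le_self_sq _
    _ < |z| := by rw [hzmn]; exact lt_add_of_pos_right _ (by positivity)
  have hts : IsCoprime (s ^ 4 + t * -t ^ 3) t :=
    IsCoprime.add_mul_left_left ((IsCoprime.pow_iff two_pos two_pos).1 hmn).pow_left _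
  refine ⟨s, t, by rintro rfl; simp at hn, by zify; exact hsz, ?_, hst⟩
  rw [show s ^ 4 + t * -t ^ 3 = x ^ 2 by linear_combination -hst] at hts
  exact (IsCoprime.pow_left_iff two_pos).1 hts

theorem exists_pow_four_add_four_mul_pow_four_eq_sq {x s t : ℤ} (hx : Odd x) (ht : t ≠ 0)
    (hxt : IsCoprime x t) (h : x ^ 2 + t ^ 4 = s ^ 4) :
    ∃ i j : ℤ, Odd i ∧ j ≠ 0 ∧ IsCoprime i j ∧ i ^ 4 + 4 * j ^ 4 = s ^ 2 := by
  have hs : 0 < s ^ 2 := sq_pos_of_ne_zero <| by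
    rintro rfl
    have : 0 < x ^ 2 + t ^ 4 := by positivity
    linarith
  have triple : PythagoreanTriple x (t ^ 2) (s ^ 2) := by
    unfold PythagoreanTriple
    linear_combination h
  obtain ⟨p, q, -, htpq, hspq, hpq, hpar, hp⟩ := triple.coprime_classification'
    (Int.isCoprime_iff_gcd_eq_one.1 hxt.pow_right) (Int.odd_iff.1 hx) hs
  rw [← Int.isCoprime_iff_gcd_eq_one] at hpq
  have hpq_pos : 0 < p * q := by
    have : 0 < t ^ 2 := by positivity
    linarith
  have hq : 0 < q := pos_of_mul_pos_right hpq_pos hp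
  obtain ⟨u, v, hu, hv, hu2, hv2, huv, htuv, hsuv⟩ : ∃ u v : ℤ, 0 ≤ u ∧ 0 ≤ v ∧ Odd u ∧ Even v ∧
      IsCoprime u v ∧ 2 * u * v = t ^ 2 ∧ u ^ 2 + v ^ 2 = s ^ 2 := by
    rw [← Int.even_iff, ← Int.odd_iff, ← Int.even_iff, ← Int.odd_iff] at hpar
    obtain ⟨hp2, hq2⟩ | ⟨hp2, hq2⟩ := hpar
    · exact ⟨q, p, hq.le, hp, hq2, hp2, hpq.symm, by linear_combination -htpq,
        by linear_combination -hspq⟩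
    · exact ⟨p, q, hp, hq.le, hp2, hq2, hpq, htpq.symm, hspq.symm⟩
  obtain ⟨i, j, rfl, rfl⟩ := exists_eq_sq_eq_two_mul_sq_of_two_mul_mul_eq_sq hu hv hv2 huv htuv
  refine ⟨i, j, (Int.odd_pow' two_ne_zero).1 hu2, ?_,
    (IsCoprime.pow_iff two_pos two_pos).1 huv.of_mul_right_right, by linear_combination hsuv⟩
  rintro rfl
  exact ht (by simpa using htuv.symm)

theorem pow_four_add_four_mul_pow_four_ne_sq_of_isCoprime {x y z : ℤ} (hx : Odd x) (hy : y ≠ 0)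
    (hxy : IsCoprime x y) : x ^ 4 + 4 * y ^ 4 ≠ z ^ 2 := by
  induction hn : z.natAbs using Nat.strong_induction_on generalizing x y z with
  | _ n ih =>
    intro h
    obtain ⟨s, t, ht, hsz, hxt, hst⟩ := exists_sq_add_pow_four_eq_pow_four hx hy hxy h
    obtain ⟨i, j, hi, hj, hij, hs⟩ := exists_pow_four_add_four_mul_pow_four_eq_sq hx ht hxt hst
    exact ih s.natAbs (hn ▸ hsz) hi hj hij rfl hs

theorem pow_four_add_four_mul_pow_four_ne_sq {x y z : ℤ} (hx : x ≠ 0) (hy : y ≠ 0) :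
    x ^ 4 + 4 * y ^ 4 ≠ z ^ 2 := by
  intro h
  obtain ⟨u, v, huv, hxu, hyv⟩ := Int.exists_gcd_one (Int.gcd_pos_of_ne_zero_left y hx)
  rw [← Int.isCoprime_iff_gcd_eq_one] at huv
  set g : ℤ := (Int.gcd x y : ℤ)
  rw [hxu] at h hx
  rw [hyv] at h hy
  obtain ⟨w, rfl⟩ : g ^ 2 ∣ z :=
    (Int.pow_dvd_pow_iff two_ne_zero).1 ⟨u ^ 4 + 4 * v ^ 4, by linear_combination -h⟩
  have huvw : u ^ 4 + 4 * v ^ 4 = w ^ 2 :=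
    mul_left_cancel₀ (pow_ne_zero 4 (right_ne_zero_of_mul hx)) (by linear_combination h)
  obtain hu2 | hu2 := u.even_or_odd
  · obtain ⟨r, rfl⟩ := hu2.two_dvd
    obtain ⟨k, rfl⟩ : (2 : ℤ) ∣ w :=
      Int.prime_two.dvd_of_dvd_pow (n := 2) ⟨8 * r ^ 4 + 2 * v ^ 4, by linear_combination -huvw⟩
    have hr : r ≠ 0 := right_ne_zero_of_mul (left_ne_zero_of_mul hx)
    have hv2 : Odd v := Int.isCoprime_two_left.1 huv.of_mul_left_left
    exact pow_four_add_four_mul_pow_four_ne_sq_of_isCoprime hv2 hr huv.of_mul_left_right.symm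
      (z := k) (by linarith)
  · exact pow_four_add_four_mul_pow_four_ne_sq_of_isCoprime hu2 (left_ne_zero_of_mul hy) huv huvw

theorem pow_four_sub_pow_four_ne_sq {a b c : ℤ} (ha : a ≠ 0) (hb : b ≠ 0) (hc : c ≠ 0) :
    a ^ 4 - b ^ 4 ≠ c ^ 2 := by
  intro h
  have hsq : c ^ 4 + 4 * (a * b) ^ 4 = (a ^ 4 + b ^ 4) ^ 2 := by
    linear_combination (-(a ^ 4 - b ^ 4) - c ^ 2) * h
  exact pow_four_add_four_mul_pow_four_ne_sq hc (mul_ne_zero ha hb) hsq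

theorem pow_four_sub_pow_four_ne_two_mul_sq {a b c : ℤ} (ha : a ≠ 0) (hb : b ≠ 0) (hc : c ≠ 0) :
    a ^ 4 - b ^ 4 ≠ 2 * c ^ 2 := by
  intro h
  have hsq : 2 ^ 2 * (c ^ 4 + (a * b) ^ 4) = (a ^ 4 + b ^ 4) ^ 2 := by
    linear_combination (-(a ^ 4 - b ^ 4) - 2 * c ^ 2) * h
  obtain ⟨k, hk⟩ : 2 ∣ a ^ 4 + b ^ 4 := (Int.pow_dvd_pow_iff two_ne_zero).1 ⟨_, hsq.symm⟩
  refine not_fermat_42 hc (mul_ne_zero ha hb) (c := k) ?_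
  rw [hk] at hsq
  exact mul_left_cancel₀ (four_ne_zero : (4 : ℤ) ≠ 0) (by linear_combination hsq)

theorem eq_of_dvd_two {d : ℤ} (hd : d ∣ 2) : d = 1 ∨ d = -1 ∨ d = 2 ∨ d = -2 := by
  have : d ≠ 0 := by rintro rfl; exact two_ne_zero (zero_dvd_iff.1 hd)
  have := Int.le_of_dvd two_pos hd
  have := Int.le_of_dvd two_pos (neg_dvd.2 hd)
  lia

theorem pow_four_sub_pow_four_ne_mul_sq_of_dvd_two {a b c d : ℤ} (ha : a ≠ 0) (hb : b ≠ 0)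
    (hc : c ≠ 0) (hd : d ∣ 2) : a ^ 4 - b ^ 4 ≠ d * c ^ 2 := by
  intro h
  obtain rfl | rfl | rfl | rfl := eq_of_dvd_two hd
  · exact pow_four_sub_pow_four_ne_sq ha hb hc (by linear_combination h)
  · exact pow_four_sub_pow_four_ne_sq hb ha hc (by linear_combination -h)
  · exact pow_four_sub_pow_four_ne_two_mul_sq ha hb hc h
  · exact pow_four_sub_pow_four_ne_two_mul_sq hb ha hc (by linear_combination -h)

section Forms

variable {R : Type*} [CommRing R] {a b d : R}

/-- The binary quadratic form with `quadForm x 1 = x ^ 2 - 2 * x - 1`. -/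
def quadForm (a b : R) : R := a ^ 2 - 2 * a * b - b ^ 2

/-- The binary octic form with `octicForm x 1 = x ^ 8 - 8 * x ^ 5 + 2 * x ^ 4 + 8 * x ^ 3 + 1`. -/
def octicForm (a b : R) : R := (a ^ 4 + b ^ 4) ^ 2 - 8 * a ^ 3 * b ^ 3 * (a ^ 2 - b ^ 2)

theorem intCast_quadForm (a b : ℤ) : ((quadForm a b : ℤ) : R) = quadForm (a : R) (b : R) := by
  simp [quadForm]

theorem intCast_octicForm (a b : ℤ) : ((octicForm a b : ℤ) : R) = octicForm (a : R) (b : R) := by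
  simp [octicForm]

theorem isCoprime_quadForm_right (hab : IsCoprime a b) : IsCoprime (quadForm a b) b := by
  have : IsCoprime (a ^ 2 + b * (-2 * a - b)) b := hab.pow_left.add_mul_left_left _
  rwa [show a ^ 2 + b * (-2 * a - b) = quadForm a b by unfold quadForm; ring] at this

theorem isCoprime_pow_four_sub_pow_four_right (hab : IsCoprime a b) :
    IsCoprime (a ^ 4 - b ^ 4) b := by
  have : IsCoprime (a ^ 4 + b * -b ^ 3) b := hab.pow_left.add_mul_left_left _
  rwa [show a ^ 4 + b * -b ^ 3 = a ^ 4 - b ^ 4 by ring] at this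

-- The cofactors in the next three proofs are homogenised Bézout cofactors of the
-- polynomials `x ^ 4 - 1`, `quadForm x 1` and `octicForm x 1`.
theorem mem_span_quadForm_pow_four_sub_pow_four (a b : R) :
    8 * b ^ 5 ∈ Ideal.span {quadForm a b, a ^ 4 - b ^ 4} :=
  Ideal.mem_span_pair.2 ⟨-3 * a ^ 3 + a ^ 2 * b - a * b ^ 2 - b ^ 3, 3 * a - 7 * b,
    by unfold quadForm; ring⟩

theorem mem_span_quadForm_octicForm (a b : R) :
    20 * b ^ 9 ∈ Ideal.span {quadForm a b, octicForm a b} :=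
  Ideal.mem_span_pair.2 ⟨12 * a ^ 7 - 5 * a ^ 6 * b + 2 * a ^ 5 * b ^ 2 - 97 * a ^ 4 * b ^ 3 +
    64 * a ^ 3 * b ^ 4 + 69 * a ^ 2 * b ^ 5 - 30 * a * b ^ 6 + 9 * b ^ 7, 29 * b - 12 * a,
    by unfold quadForm octicForm; ring⟩

theorem mem_span_pow_four_sub_pow_four_octicForm (a b : R) :
    68 * b ^ 11 ∈ Ideal.span {a ^ 4 - b ^ 4, octicForm a b} :=
  Ideal.mem_span_pair.2 ⟨2 * a ^ 7 - 8 * a ^ 6 * b - 2 * a ^ 5 * b ^ 2 - 25 * a ^ 4 * b ^ 3 +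
    70 * a ^ 3 * b ^ 4 + 8 * a ^ 2 * b ^ 5 + 2 * a * b ^ 6 - 59 * b ^ 7,
    -2 * a ^ 3 + 8 * a ^ 2 * b + 2 * a * b ^ 2 + 9 * b ^ 3, by unfold octicForm; ring⟩

theorem dvd_mul_of_mem_span_pair {x y m n q : R} (hx : x ∈ Ideal.span {q, m})
    (hy : y ∈ Ideal.span {q, n}) (hq : d ∣ q) (hmn : d ∣ m * n) : d ∣ x * y := by
  obtain ⟨u, v, rfl⟩ := Ideal.mem_span_pair.1 hx
  obtain ⟨u', v', rfl⟩ := Ideal.mem_span_pair.1 hy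
  rw [show (u * q + v * m) * (u' * q + v' * n) =
    q * (u * (u' * q + v' * n) + v * m * u') + m * n * (v * v') by ring]
  exact dvd_add (hq.mul_right _) (hmn.mul_right _)

theorem dvd_of_dvd_quadForm_of_dvd_mul (hab : IsCoprime a b) (hQ : d ∣ quadForm a b)
    (h : d ∣ (a ^ 4 - b ^ 4) * octicForm a b) : d ∣ 2 ^ 5 * 5 := by
  have hdb : IsCoprime d (b ^ 14) :=
    ((isCoprime_quadForm_right hab).of_isCoprime_of_dvd_left hQ).pow_right
  refine hdb.dvd_of_dvd_mul_right ?_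
  rw [show 2 ^ 5 * 5 * b ^ 14 = 8 * b ^ 5 * (20 * b ^ 9) by ring]
  exact dvd_mul_of_mem_span_pair (mem_span_quadForm_pow_four_sub_pow_four a b)
    (mem_span_quadForm_octicForm a b) hQ h

theorem dvd_of_dvd_pow_four_sub_pow_four_of_dvd_mul (hab : IsCoprime a b) (hA : d ∣ a ^ 4 - b ^ 4)
    (h : d ∣ quadForm a b * octicForm a b) : d ∣ 2 ^ 5 * 17 := by
  have hdb : IsCoprime d (b ^ 16) :=
    ((isCoprime_pow_four_sub_pow_four_right hab).of_isCoprime_of_dvd_left hA).pow_right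
  refine hdb.dvd_of_dvd_mul_right ?_
  rw [show 2 ^ 5 * 17 * b ^ 16 = 8 * b ^ 5 * (68 * b ^ 11) by ring]
  exact dvd_mul_of_mem_span_pair
    (Set.pair_comm (quadForm a b) _ ▸ mem_span_quadForm_pow_four_sub_pow_four a b)
    (mem_span_pow_four_sub_pow_four_octicForm a b) hA h

end Forms

theorem not_intCast_zmod_eq_zero_and_of_isCoprime {a b : ℤ} {q : ℕ} (hq : q ≠ 1)
    (hab : IsCoprime a b) : ¬((a : ZMod q) = 0 ∧ (b : ZMod q) = 0) := by
  rw [ZMod.intCast_zmod_eq_zero_iff_dvd, ZMod.intCast_zmod_eq_zero_iff_dvd]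
  rintro ⟨ha, hb⟩
  exact hq (by simpa [Int.isUnit_iff_natAbs_eq] using hab.isUnit_of_dvd' ha hb)

theorem dvd_of_squarefree_of_dvd_pow_mul {R : Type*} [CommRing R] [IsDomain R]
    [IsPrincipalIdealRing R] {d q p : R} {k : ℕ} (hd : Squarefree d) (hk : k ≠ 0) (hp : Prime p)
    (hpd : ¬p ∣ d) (h : d ∣ q ^ k * p) : d ∣ q :=
  (hd.dvd_pow_iff_dvd hk).1 ((hp.coprime_iff_not_dvd.2 hpd).symm.dvd_of_dvd_mul_right h)

theorem not_five_dvd_quadForm {a b : ℤ} (hab : IsCoprime a b) : ¬5 ∣ quadForm a b := by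
  intro h
  have anisotropic : ∀ a b : ZMod 5, quadForm a b = 0 → a = 0 ∧ b = 0 := by decide
  refine not_intCast_zmod_eq_zero_and_of_isCoprime (by decide) hab (anisotropic a b ?_)
  rw [← intCast_quadForm, ZMod.intCast_zmod_eq_zero_iff_dvd]
  exact h

theorem exists_quadForm_eq_mul_sq {a b : ℤ} (hab : IsCoprime a b)
    (h : IsSquare ((a ^ 4 - b ^ 4) * quadForm a b * octicForm a b)) :
    ∃ d s : ℤ, d ∣ 2 ∧ quadForm a b = d * s ^ 2 := by
  rw [mul_comm (a ^ 4 - b ^ 4), mul_assoc] at h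
  obtain ⟨d, s, hd, hdvd, hQ⟩ := exists_squarefree_dvd_of_isSquare_mul h
  have hdQ : d ∣ quadForm a b := ⟨s ^ 2, hQ⟩
  have h5 : ¬5 ∣ d := fun h5 ↦ not_five_dvd_quadForm hab (h5.trans hdQ)
  exact ⟨d, s, dvd_of_squarefree_of_dvd_pow_mul hd (by decide) (by norm_num) h5
    (dvd_of_dvd_quadForm_of_dvd_mul hab hdQ hdvd), hQ⟩

theorem isSquare_zmod_seventeen_of_dvd_two {d : ℤ} (hd : d ∣ 2) : IsSquare (d : ZMod 17) := by
  obtain rfl | rfl | rfl | rfl := eq_of_dvd_two hd <;> decide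

theorem not_seventeen_dvd_mul_of_dvd_pow_four_sub_pow_four {a b : ℤ} (hab : IsCoprime a b)
    (hQ : IsSquare (quadForm a b : ZMod 17)) (hA : 17 ∣ a ^ 4 - b ^ 4) :
    ¬17 ∣ quadForm a b * octicForm a b := by
  intro hQG
  have eq_four_mul : ∀ a b : ZMod 17, a ^ 4 - b ^ 4 = 0 →
      quadForm a b * octicForm a b = 0 → b = 4 * a := by decide
  have eq_zero : ∀ a : ZMod 17, IsSquare (quadForm a (4 * a)) → a = 0 := by decide
  have hb : (b : ZMod 17) = 4 * a := by
    refine eq_four_mul a b ?_ ?_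
    · exact_mod_cast (ZMod.intCast_zmod_eq_zero_iff_dvd _ 17).2 hA
    · rw [← intCast_quadForm, ← intCast_octicForm]
      exact_mod_cast (ZMod.intCast_zmod_eq_zero_iff_dvd _ 17).2 hQG
  have ha : (a : ZMod 17) = 0 := eq_zero a (hb ▸ hQ)
  exact not_intCast_zmod_eq_zero_and_of_isCoprime (by decide) hab ⟨ha, by rw [hb, ha, mul_zero]⟩

theorem exists_pow_four_sub_pow_four_eq_mul_sq {a b : ℤ} (hab : IsCoprime a b)
    (h : IsSquare ((a ^ 4 - b ^ 4) * quadForm a b * octicForm a b)) :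
    ∃ d c : ℤ, d ∣ 2 ∧ a ^ 4 - b ^ 4 = d * c ^ 2 := by
  obtain ⟨e, s, he, hQ⟩ := exists_quadForm_eq_mul_sq hab h
  have hQ17 : IsSquare (quadForm a b : ZMod 17) := by
    rw [← intCast_quadForm, hQ, Int.cast_mul, Int.cast_pow]
    exact (isSquare_zmod_seventeen_of_dvd_two he).mul (IsSquare.sq _)
  rw [mul_assoc] at h
  obtain ⟨d, c, hd, hdvd, hA⟩ := exists_squarefree_dvd_of_isSquare_mul h
  have hdA : d ∣ a ^ 4 - b ^ 4 := ⟨c ^ 2, hA⟩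
  have h17 : ¬17 ∣ d := fun h17 ↦
    not_seventeen_dvd_mul_of_dvd_pow_four_sub_pow_four hab hQ17 (h17.trans hdA) (h17.trans hdvd)
  exact ⟨d, c, dvd_of_squarefree_of_dvd_pow_mul hd (by decide) (by norm_num) h17
    (dvd_of_dvd_pow_four_sub_pow_four_of_dvd_mul hab hdA hdvd), hA⟩

theorem pow_four_eq_pow_four_of_isSquare_forms {a b : ℤ} (ha : a ≠ 0) (hb : b ≠ 0)
    (hab : IsCoprime a b) (h : IsSquare ((a ^ 4 - b ^ 4) * quadForm a b * octicForm a b)) :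
    a ^ 4 = b ^ 4 := by
  obtain ⟨d, c, hd, hA⟩ := exists_pow_four_sub_pow_four_eq_mul_sq hab h
  obtain rfl | hc := eq_or_ne c 0
  · linear_combination hA
  · exact absurd hA (pow_four_sub_pow_four_ne_mul_sq_of_dvd_two ha hb hc hd)

theorem curve_eval_div_mul_pow_eq_forms {K : Type*} [Field K] (a : K) {b : K} (hb : b ≠ 0) :
    ((a / b) ^ 4 - 1) * ((a / b) ^ 2 - 2 * (a / b) - 1) *
      ((a / b) ^ 8 - 8 * (a / b) ^ 5 + 2 * (a / b) ^ 4 + 8 * (a / b) ^ 3 + 1) * b ^ 14 =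
    (a ^ 4 - b ^ 4) * quadForm a b * octicForm a b := by
  unfold quadForm octicForm
  field_simp
  ring

theorem isSquare_forms_num_den {x y : ℚ} (h : y ^ 2 = (x ^ 4 - 1) * (x ^ 2 - 2 * x - 1) *
      (x ^ 8 - 8 * x ^ 5 + 2 * x ^ 4 + 8 * x ^ 3 + 1)) :
    IsSquare ((x.num ^ 4 - x.den ^ 4) * quadForm x.num x.den * octicForm x.num (x.den : ℤ)) := by
  have hforms := curve_eval_div_mul_pow_eq_forms (x.num : ℚ) (b := x.den) (by simp)
  rw [x.num_div_den, ← h] at hforms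
  rw [← Rat.isSquare_intCast_iff]
  refine ⟨y * x.den ^ 7, ?_⟩
  push_cast [intCast_quadForm, intCast_octicForm]
  linear_combination -hforms

theorem eq_zero_or_pow_four_eq_one_of_sq_eq {x y : ℚ} (h : y ^ 2 = (x ^ 4 - 1) *
      (x ^ 2 - 2 * x - 1) * (x ^ 8 - 8 * x ^ 5 + 2 * x ^ 4 + 8 * x ^ 3 + 1)) :
    x = 0 ∨ x ^ 4 = 1 := by
  refine or_iff_not_imp_left.2 fun hx ↦ ?_
  have hcop : IsCoprime x.num x.den := Int.isCoprime_iff_gcd_eq_one.2 x.reduced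
  have hpow := pow_four_eq_pow_four_of_isSquare_forms (Rat.num_ne_zero.2 hx)
    (mod_cast x.den_ne_zero) hcop (isSquare_forms_num_den h)
  have hden : (x.den : ℚ) ^ 4 ≠ 0 := by simp
  rw [← x.num_div_den, div_pow, div_eq_one_iff_eq hden]
  exact_mod_cast hpow

/-- The affine rational points of the hyperelliptic curve
`y² = (x⁴ − 1)(x² − 2x − 1)(x⁸ − 8x⁵ + 2x⁴ + 8x³ + 1)` are exactly
`(±1, 0)` and `(0, ±1)`. -/
theorem genus6_curve_points (x y : ℚ) :
    y ^ 2 = (x ^ 4 - 1) * (x ^ 2 - 2 * x - 1) *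
      (x ^ 8 - 8 * x ^ 5 + 2 * x ^ 4 + 8 * x ^ 3 + 1) ↔
    (x = 1 ∧ y = 0) ∨ (x = -1 ∧ y = 0) ∨ (x = 0 ∧ y = 1) ∨ (x = 0 ∧ y = -1) := by
  constructor
  · intro h
    obtain rfl | hx := eq_zero_or_pow_four_eq_one_of_sq_eq h
    · have hy : y = 1 ∨ y = -1 := sq_eq_one_iff.1 (by linear_combination h)
      tauto
    · have hy : y = 0 := by
        rw [hx, sub_self, zero_mul, zero_mul] at h
        exact pow_eq_zero_iff two_ne_zero |>.1 h
      obtain hx | hx : x = 1 ∨ x = -1 := by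
        simpa [Nat.even_iff] using pow_eq_one_iff_cases.1 hx
      · exact .inl ⟨hx, hy⟩
      · exact .inr (.inl ⟨hx, hy⟩)
  · rintro (⟨rfl, rfl⟩ | ⟨rfl, rfl⟩ | ⟨rfl, rfl⟩ | ⟨rfl, rfl⟩) <;> norm_num
end

section
/- The set of pairs (x,y) ∈ ℚ × ℚ satisfying y² = (x² + 1)(x⁸ − 8x⁵ + 2x⁴ + 8x³ + 1)(x² − 2x − 1)(x⁶ − 3x⁴ − 16x³ + 3x² − 1) is exactly {(1, 16), (1, −16), (−1, 16), (−1, −16), (0, 1), (0, −1)}. -/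
/-!
Put `t = x - 1 / x`. Up to powers of `x`, the octic, quadratic and sextic factors of the
right-hand side become `t ^ 4 + 4 * (t - 1) ^ 2`, `t - 2` and `t ^ 3 - 16`, while
`(x + 1 / x) ^ 2 = t ^ 2 + 4`. In homogeneous coordinates the octic shares only the primes `2`,
`5`, `17` with the other factors, so on the curve its square class divides `170`; being
congruent to `1` modulo `24` after removal of a square factor, the octic is a square. Hence
`t = T / S` gives a point of the genus-one curve `T ^ 4 + 4 * S ^ 2 * (T - S) ^ 2 = z ^ 2`, which
has rank `0`: a descent through a pair of dual `2`-isogenies leaves only `T = 0`, `S = 0`,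
`T = S`. The last value is not of the form `x - 1 / x`, and the others give `x = 1, -1, 0`.
-/

lemma isCoprime_of_isCoprime_add_of_mul_eq {R : Type*} [CommRing R] [IsBezout R] {P Q D N : R}
    {k : ℕ} (hD : Squarefree D) (hs : IsCoprime (P + Q) N) (h : P * Q = D * N ^ k) :
    IsCoprime P Q := by
  refine IsRelPrime.isCoprime fun d hP hQ ↦ hD d ?_
  have hdN : IsCoprime d N := hs.of_isCoprime_of_dvd_left (dvd_add hP hQ)
  have hdd : d * d ∣ D * N ^ k := h ▸ mul_dvd_mul hP hQ
  exact (hdN.mul_left hdN).pow_right.dvd_of_dvd_mul_right hdd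

lemma exists_mul_pow_of_coprime_mul_eq {P Q D N k : ℕ} (hk : k ≠ 0) (hD : D ≠ 0)
    (hPQ : P.Coprime Q) (h : P * Q = D * N ^ k) :
    ∃ D₁ D₂ a b : ℕ, D₁ * D₂ = D ∧ a.Coprime b ∧ N = a * b ∧
      P = D₁ * a ^ k ∧ Q = D₂ * b ^ k := by
  obtain ⟨D₁, D₂, ⟨P', rfl⟩, ⟨Q', rfl⟩, rfl⟩ := exists_dvd_and_dvd_of_dvd_mul (Dvd.intro _ h.symm)
  have hmul : P' * Q' = N ^ k :=
    mul_left_cancel₀ hD (by rw [← h]; ring)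
  have hcop : P'.Coprime Q' := hPQ.coprime_mul_left.coprime_mul_left_right
  obtain ⟨a, rfl⟩ := exists_eq_pow_of_mul_eq_pow (Nat.isUnit_iff.2 hcop) hmul
  obtain ⟨b, rfl⟩ := exists_eq_pow_of_mul_eq_pow (Nat.isUnit_iff.2 hcop.symm)
    ((mul_comm _ _).trans hmul)
  have hk0 : 0 < k := Nat.pos_of_ne_zero hk
  rw [Nat.coprime_pow_left_iff hk0, Nat.coprime_pow_right_iff hk0] at hcop
  refine ⟨D₁, D₂, a, b, rfl, hcop, ?_, rfl, rfl⟩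
  exact Nat.pow_left_injective hk (by simpa only [mul_pow] using hmul.symm)

lemma exists_mul_pow_of_isCoprime_add_of_mul_eq {P Q N : ℤ} {D k : ℕ} (hk : Even k) (hk0 : k ≠ 0)
    (hD : Squarefree D) (hs : 0 ≤ P + Q) (hc : IsCoprime (P + Q) N) (h : P * Q = D * N ^ k) :
    ∃ (D₁ D₂ : ℕ) (a b : ℤ), D₁ * D₂ = D ∧ IsCoprime a b ∧ N = a * b ∧
      P = D₁ * a ^ k ∧ Q = D₂ * b ^ k := by
  have hcop : IsCoprime P Q :=
    isCoprime_of_isCoprime_add_of_mul_eq (Int.squarefree_natCast.2 hD) hc h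
  have hmul : 0 ≤ P * Q := h ▸ mul_nonneg D.cast_nonneg (hk.pow_nonneg N)
  obtain ⟨hP, hQ⟩ : 0 ≤ P ∧ 0 ≤ Q := by
    rcases mul_nonneg_iff.1 hmul with h | h <;> omega
  lift P to ℕ using hP
  lift Q to ℕ using hQ
  have hnat : P * Q = D * N.natAbs ^ k := by
    zify; rwa [hk.pow_abs]
  obtain ⟨D₁, D₂, a, b, hD₁₂, hab, hN, rfl, rfl⟩ :=
    exists_mul_pow_of_coprime_mul_eq hk0 hD.ne_zero (Nat.isCoprime_iff_coprime.1 hcop) hnat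
  have hab' : IsCoprime (a : ℤ) b := Nat.isCoprime_iff_coprime.2 hab
  rcases Int.natAbs_eq N with hN' | hN' <;> rw [hN, Nat.cast_mul] at hN'
  · exact ⟨D₁, D₂, a, b, hD₁₂, hab', hN', by push_cast; rfl, by push_cast; rfl⟩
  · exact ⟨D₁, D₂, -a, b, hD₁₂, hab'.neg_left, by rw [hN', neg_mul],
      by rw [hk.neg_pow]; push_cast; rfl, by push_cast; rfl⟩

lemma isCoprime_sq_sub_sq {R : Type*} [CommRing R] {a b : R} (h : IsCoprime a b) :
    IsCoprime (a ^ 2 - b ^ 2) b := by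
  have := h.pow_left (m := 2).add_mul_left_left (-b)
  rwa [show a ^ 2 + b * -b = a ^ 2 - b ^ 2 by ring] at this

lemma isCoprime_sq_sub_sq_mul {R : Type*} [CommRing R] {a b : R} (h : IsCoprime a b) :
    IsCoprime (a ^ 2 - b ^ 2) (a * b) :=
  IsCoprime.mul_right (neg_sub (b ^ 2) (a ^ 2) ▸ (isCoprime_sq_sub_sq h.symm).neg_left)
    (isCoprime_sq_sub_sq h)

lemma exists_pow_four_of_sq_add_four_mul_pow_four {X N Z : ℤ} (hXN : IsCoprime X N) (hZ : 0 ≤ Z)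
    (h : X ^ 2 + 4 * N ^ 4 = Z ^ 2) :
    ∃ g e : ℤ, IsCoprime g e ∧ N = g * e ∧ X = g ^ 4 - e ^ 4 ∧ Z = g ^ 4 + e ^ 4 := by
  have hpar : Even (Z - X) := by
    have : Even (Z ^ 2 - X ^ 2) := ⟨2 * N ^ 4, by linarith⟩
    simpa [Int.even_sub, Int.even_pow] using this
  obtain ⟨Q, hQ⟩ := hpar
  have hZN : IsCoprime (Z - Q + Q) N := by
    have hsq : IsCoprime (X ^ 2 + N * (4 * N ^ 3)) N := hXN.pow_left.add_mul_left_left _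
    rw [show X ^ 2 + N * (4 * N ^ 3) = Z ^ 2 by linarith] at hsq
    simpa using (IsCoprime.pow_left_iff two_pos).1 hsq
  have hPQ : (Z - Q) * Q = (1 : ℕ) * N ^ 4 := by
    obtain rfl : X = Z - 2 * Q := by linarith
    push_cast; linarith
  obtain ⟨D₁, D₂, g, e, hD, hge, hN, hg, he⟩ := exists_mul_pow_of_isCoprime_add_of_mul_eq
    (by decide) four_ne_zero squarefree_one (by simpa using hZ) hZN hPQ
  obtain ⟨rfl, rfl⟩ := mul_eq_one.1 hD
  push_cast at hg he
  exact ⟨g, e, hge, hN, by linarith, by linarith⟩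

lemma exists_sq_sub_sq_sq_add_of_mul_eq {P Q N : ℤ} (hs : 0 ≤ P + Q) (hc : IsCoprime (P + Q) N)
    (h : P * Q = 5 * N ^ 4) :
    ∃ a b : ℤ, IsCoprime a b ∧ N = a * b ∧ P + Q - 2 * N ^ 2 = (a ^ 2 - b ^ 2) ^ 2 + 4 * b ^ 4 := by
  obtain ⟨D₁, D₂, a, b, hD, hab, rfl, hP, hQ⟩ := exists_mul_pow_of_isCoprime_add_of_mul_eq
    (D := 5) (by decide) four_ne_zero Nat.prime_five.squarefree hs hc (by exact_mod_cast h)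
  rcases Nat.prime_mul_iff.1 (hD ▸ Nat.prime_five) with ⟨-, rfl⟩ | ⟨-, rfl⟩
  · obtain rfl : D₁ = 5 := by omega
    exact ⟨b, a, hab.symm, mul_comm a b, by rw [hP, hQ]; push_cast; ring⟩
  · obtain rfl : D₂ = 5 := by omega
    exact ⟨a, b, hab, rfl, by rw [hP, hQ]; push_cast; ring⟩

lemma exists_sq_sub_sq_sq_add_eq_sq_of_odd {m n k : ℤ} (hn : Odd n) (hmn : IsCoprime m n)
    (h : m ^ 4 + m ^ 2 * n ^ 2 - n ^ 4 = k ^ 2) :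
    ∃ a b : ℤ, IsCoprime a b ∧ n = a * b ∧ (a ^ 2 - b ^ 2) ^ 2 + 4 * b ^ 4 = (2 * m) ^ 2 := by
  have hsum : (2 * m ^ 2 + n ^ 2 - 2 * k) + (2 * m ^ 2 + n ^ 2 + 2 * k) =
      2 ^ 2 * m ^ 2 + n * (2 * n) := by ring
  have h2n : IsCoprime 2 n := Int.isCoprime_two_left.2 hn
  -- `(2 m² + n²)² - (2 k)² = 5 n⁴`
  obtain ⟨a, b, hab, hn, hs⟩ := exists_sq_sub_sq_sq_add_of_mul_eq
    (P := 2 * m ^ 2 + n ^ 2 - 2 * k) (Q := 2 * m ^ 2 + n ^ 2 + 2 * k) (N := n)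
    (by ring_nf; positivity)
    (hsum ▸ (h2n.pow_left.mul_left hmn.pow_left).add_mul_left_left _) (by linarith)
  exact ⟨a, b, hab, hn, by linarith⟩

lemma exists_sq_sub_sq_sq_add_eq_sq_of_even {m N k : ℤ} (hmn : IsCoprime m (2 * N))
    (h : m ^ 4 + m ^ 2 * (2 * N) ^ 2 - (2 * N) ^ 4 = k ^ 2) :
    ∃ a b : ℤ, IsCoprime a b ∧ N = a * b ∧ (a ^ 2 - b ^ 2) ^ 2 + 4 * b ^ 4 = m ^ 2 := by
  have hpar : Even (m ^ 2 - k) := by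
    have : Even (m ^ 4 - k ^ 2) := ⟨8 * N ^ 4 - 2 * m ^ 2 * N ^ 2, by linarith⟩
    simpa [Int.even_sub, Int.even_pow] using this
  obtain ⟨w, hw⟩ := hpar
  obtain rfl : k = m ^ 2 - 2 * w := by linarith
  have hsum : (w + N ^ 2) + (m ^ 2 - w + N ^ 2) = m ^ 2 + N * (2 * N) := by ring
  obtain ⟨a, b, hab, hN, hs⟩ := exists_sq_sub_sq_sq_add_of_mul_eq
    (P := w + N ^ 2) (Q := m ^ 2 - w + N ^ 2) (N := N) (by ring_nf; positivity)
    (hsum ▸ hmn.of_mul_right_right.pow_left.add_mul_left_left _) (by linarith)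
  exact ⟨a, b, hab, hN, by linarith⟩

-- Composing a `2`-isogeny with its dual: `(m, n)` is, up to torsion, the double of `(g, e)`.
lemma exists_half_of_pow_four_add_sub_eq_sq {m n k : ℤ} (hmn : IsCoprime m n)
    (h : m ^ 4 + m ^ 2 * n ^ 2 - n ^ 4 = k ^ 2) :
    ∃ c g e a : ℤ, (c = 1 ∨ c = 2) ∧ IsCoprime g e ∧ g ^ 4 + g ^ 2 * e ^ 2 - e ^ 4 = a ^ 2 ∧
      c * n = 2 * (a * (g * e)) ∧ c * |m| = g ^ 4 + e ^ 4 := by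
  obtain ⟨c, a, b, hc, hab, hn, hm⟩ : ∃ c a b : ℤ, (c = 1 ∨ c = 2) ∧ IsCoprime a b ∧
      c * n = 2 * (a * b) ∧ (a ^ 2 - b ^ 2) ^ 2 + 4 * b ^ 4 = (c * m) ^ 2 := by
    rcases n.even_or_odd' with ⟨N, rfl | hN⟩
    · obtain ⟨a, b, hab, rfl, hm⟩ := exists_sq_sub_sq_sq_add_eq_sq_of_even hmn h
      exact ⟨1, a, b, .inl rfl, hab, one_mul _, by rw [hm, one_mul]⟩
    · obtain ⟨a, b, hab, rfl, hm⟩ := exists_sq_sub_sq_sq_add_eq_sq_of_odd ⟨N, hN⟩ hmn h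
      exact ⟨2, a, b, .inr rfl, hab, rfl, hm⟩
  have hc0 : 0 ≤ c := by omega
  obtain ⟨g, e, hge, rfl, hX, hZ⟩ := exists_pow_four_of_sq_add_four_mul_pow_four
    (isCoprime_sq_sub_sq hab) (by positivity : 0 ≤ c * |m|) (by rw [hm, mul_pow, mul_pow, sq_abs])
  exact ⟨c, g, e, a, hc, hge, by linarith, hn, hZ⟩

lemma sq_eq_one_of_pow_four_add_pow_four_le {g e : ℤ} (hg : g ≠ 0) (he : e ≠ 0)
    (h : g ^ 4 + e ^ 4 ≤ 2 * |g|) : g ^ 2 = 1 ∧ e ^ 2 = 1 := by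
  have hg1 : 1 ≤ |g| := Int.one_le_abs hg
  have he1 : 1 ≤ |e| := Int.one_le_abs he
  rw [← Even.pow_abs (by decide) g, ← Even.pow_abs (by decide) e] at h
  have hg' : |g| = 1 := by
    nlinarith [pow_le_pow_left₀ zero_le_one he1 4, sq_nonneg (|g| ^ 2 - 1), sq_nonneg (|g| - 1)]
  have he' : |e| = 1 := by
    rw [hg'] at h
    nlinarith [sq_nonneg (|e| ^ 2 - 1)]
  exact ⟨by rw [← sq_abs, hg', one_pow], by rw [← sq_abs, he', one_pow]⟩

lemma sq_eq_one_of_isCoprime_of_sq_eq_sq {g e : ℤ} (hge : IsCoprime g e) (h : g ^ 2 = e ^ 2) :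
    g ^ 2 = 1 ∧ e ^ 2 = 1 := by
  have he : IsUnit (e ^ 2) := isCoprime_self.1 (h ▸ hge.pow (m := 2) (n := 2))
  have he1 : e ^ 2 = 1 := Int.isUnit_sq ((isUnit_pow_iff two_ne_zero).1 he)
  exact ⟨h.trans he1, he1⟩

theorem eq_zero_or_sq_eq_sq_of_pow_four_add_sub_eq_sq {m n k : ℤ} (hmn : IsCoprime m n)
    (h : m ^ 4 + m ^ 2 * n ^ 2 - n ^ 4 = k ^ 2) : n = 0 ∨ m ^ 2 = n ^ 2 := by
  induction hM : m.natAbs using Nat.strong_induction_on generalizing m n k with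
  | _ M ih =>
  refine or_iff_not_imp_left.2 fun hn ↦ ?_
  obtain ⟨c, g, e, a, hc, hge, ha, hcn, hcm⟩ := exists_half_of_pow_four_add_sub_eq_sq hmn h
  have hcn0 : 2 * (a * (g * e)) ≠ 0 := hcn ▸ mul_ne_zero (by omega) hn
  have hg : g ≠ 0 := by rintro rfl; simp at hcn0
  have he : e ≠ 0 := by rintro rfl; simp at hcn0
  obtain ⟨hg1, he1⟩ : g ^ 2 = 1 ∧ e ^ 2 = 1 := by
    by_cases hlt : |g| < |m|
    · have hgM : g.natAbs < M := by rw [← hM]; zify; exact hlt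
      exact sq_eq_one_of_isCoprime_of_sq_eq_sq hge ((ih _ hgM hge ha rfl).resolve_left he)
    · refine sq_eq_one_of_pow_four_add_pow_four_le hg he ?_
      rcases hc with rfl | rfl <;> linarith [abs_nonneg g]
  have hg4 : g ^ 4 = 1 := by rw [show g ^ 4 = (g ^ 2) ^ 2 by ring, hg1, one_pow]
  have he4 : e ^ 4 = 1 := by rw [show e ^ 4 = (e ^ 2) ^ 2 by ring, he1, one_pow]
  have ha1 : a ^ 2 = 1 := by rw [← ha, hg4, he4, hg1, he1]; norm_num
  have hc0 : c ^ 2 ≠ 0 := pow_ne_zero 2 (by omega)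
  refine mul_left_cancel₀ hc0 ?_
  calc c ^ 2 * m ^ 2 = (c * |m|) ^ 2 := by rw [mul_pow, sq_abs]
    _ = 4 := by rw [hcm, hg4, he4]; norm_num
    _ = (c * n) ^ 2 := by rw [hcn]; simp only [mul_pow, ha1, hg1, he1]; norm_num
    _ = c ^ 2 * n ^ 2 := mul_pow ..

lemma eq_zero_or_eq_zero_of_sq_add_four_mul_pow_four {X N Z k : ℤ} (hXN : IsCoprime X N)
    (hZ : X ^ 2 + 4 * N ^ 4 = Z ^ 2) (hk : N ^ 2 - X = k ^ 2) : N = 0 ∨ X = 0 := by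
  obtain ⟨g, e, hge, rfl, rfl, -⟩ := exists_pow_four_of_sq_add_four_mul_pow_four hXN
    (abs_nonneg Z) (by rw [sq_abs, hZ])
  have h : e ^ 4 + e ^ 2 * g ^ 2 - g ^ 4 = k ^ 2 := by linarith
  rcases eq_zero_or_sq_eq_sq_of_pow_four_add_sub_eq_sq hge.symm h with rfl | heg
  · exact .inl (zero_mul e)
  · exact .inr (by rw [show g ^ 4 - e ^ 4 = (g ^ 2) ^ 2 - (e ^ 2) ^ 2 by ring, heg, sub_self])

/-- The octic factor `x⁸ - 8x⁵ + 2x⁴ + 8x³ + 1` equals `x⁴ (t⁴ + 4 (t - 1)²)` with `t = x - 1/x`;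
this is the homogenization of `t⁴ + 4 (t - 1)²` at `t = T / S`. -/
def quarticForm {R : Type*} [CommRing R] (T S : R) : R := T ^ 4 + 4 * S ^ 2 * (T - S) ^ 2

lemma eq_zero_of_quarticForm_eq_sq_of_odd {T S z : ℤ} (hT : Odd T) (hTS : IsCoprime T S)
    (h : quarticForm T S = z ^ 2) : T = 0 ∨ S * (T - S) = 0 := by
  have hsub : IsCoprime T (T - S) := by
    simpa [sub_eq_neg_add] using hTS.neg_right.add_mul_left_right 1
  have h2 : IsCoprime T (2 ^ 2) := (Int.isCoprime_two_right.2 hT).pow_right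
  have := eq_zero_or_eq_zero_of_sq_add_four_mul_pow_four (X := 2 ^ 2 * (S * (T - S)))
    (Z := 2 * z) (k := 2 * S - T) (h2.mul_right (hTS.mul_right hsub)).symm
    (by rw [mul_pow 2 z, ← h, quarticForm]; ring) (by ring)
  simpa only [mul_eq_zero, pow_eq_zero_iff two_ne_zero, two_ne_zero, false_or] using this

lemma eq_zero_of_quarticForm_eq_sq_of_even {T S z : ℤ} (hT : Even T) (hTS : IsCoprime T S)
    (h : quarticForm T S = z ^ 2) : T = 0 ∨ S * (T - S) = 0 := by
  obtain ⟨U, rfl⟩ := hT.two_dvd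
  have hUS : IsCoprime U S := hTS.of_mul_left_right
  have hsub : IsCoprime U (2 * U - S) := by
    simpa [sub_eq_neg_add, mul_comm] using hUS.neg_right.add_mul_left_right 2
  obtain ⟨w, rfl⟩ : (2 : ℤ) ∣ z := (Int.pow_dvd_pow_iff two_ne_zero).1
    ⟨4 * U ^ 4 + S ^ 2 * (2 * U - S) ^ 2, by rw [← h, quarticForm]; ring⟩
  rw [quarticForm] at h
  have := eq_zero_or_eq_zero_of_sq_add_four_mul_pow_four (Z := w) (k := S - U)
    (hUS.mul_right hsub).symm (by linarith) (by ring)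
  simpa only [mul_eq_zero, two_ne_zero, false_or] using this

theorem eq_zero_of_quarticForm_eq_sq {T S z : ℤ} (hTS : IsCoprime T S)
    (h : quarticForm T S = z ^ 2) : T = 0 ∨ S * (T - S) = 0 :=
  T.even_or_odd.elim (eq_zero_of_quarticForm_eq_sq_of_even · hTS h)
    (eq_zero_of_quarticForm_eq_sq_of_odd · hTS h)

/-- The product of the three other factors of the curve, homogenized in `x = p / q` and written in
terms of `T = p² - q²` and `S = p q`. -/
def cofactor {R : Type*} [CommRing R] (p q : R) : R :=
  (p ^ 2 + q ^ 2) * ((p ^ 2 - q ^ 2 - 2 * (p * q)) * ((p ^ 2 - q ^ 2) ^ 3 - 16 * (p * q) ^ 3))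

lemma exists_bezout_quarticForm {R : Type*} [CommRing R] (T S : R) :
    ∃ a b : R, a * quarticForm T S + b * ((T ^ 2 + 4 * S ^ 2) * ((T - 2 * S) *
      (T ^ 3 - 16 * S ^ 3))) = 2 ^ 6 * 5 * 17 ^ 3 * S ^ 17 := by
  set B := quarticForm T S with hB
  rw [quarticForm] at hB
  obtain ⟨u, hu⟩ : ∃ u, 20 * S ^ 4 = B + u * (T - 2 * S) :=
    ⟨-(T ^ 3 + 2 * S * T ^ 2 + 8 * S ^ 2 * T + 8 * S ^ 3), by rw [hB]; ring⟩
  obtain ⟨v, hv⟩ : ∃ v, 68 * S ^ 5 = (S + 2 * T) * B + v * (T ^ 2 + 4 * S ^ 2) :=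
    ⟨16 * S ^ 3 - (S + 2 * T) * T ^ 2, by rw [hB]; ring⟩
  obtain ⟨r, w, hw⟩ : ∃ r w, 1156 * S ^ 8 = r * B + w * (T ^ 3 - 16 * S ^ 3) :=
    ⟨(T ^ 2 - T * S + S ^ 2) ^ 2, -(T * (T ^ 2 - T * S + S ^ 2) ^ 2) -
      4 * S ^ 2 * (T ^ 3 - 16 * S ^ 3 + 34 * S ^ 3), by rw [hB]; ring⟩
  refine ⟨68 * S ^ 5 * (1156 * S ^ 8) + u * (T - 2 * S) * ((S + 2 * T) * (1156 * S ^ 8) +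
    v * (T ^ 2 + 4 * S ^ 2) * r), u * v * w, ?_⟩
  calc _ = (B + u * (T - 2 * S)) * (68 * S ^ 5) * (1156 * S ^ 8) := by
        rw [hv, hw]; ring
    _ = _ := by rw [← hu]; ring

lemma dvd_of_dvd_quarticForm_of_dvd_cofactor {p q : ℤ} {d : ℕ} (hpq : IsCoprime p q)
    (hd : Squarefree d) (hB : (d : ℤ) ∣ quarticForm (p ^ 2 - q ^ 2) (p * q))
    (hH : (d : ℤ) ∣ cofactor p q) : d ∣ 170 := by
  have hdS : IsCoprime (d : ℤ) (p * q) := by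
    have h := ((isCoprime_sq_sub_sq_mul hpq).pow_left (m := 4)).add_mul_left_left
      (4 * (p * q) * (p ^ 2 - q ^ 2 - p * q) ^ 2)
    refine IsCoprime.of_isCoprime_of_dvd_left h (hB.trans (dvd_of_eq ?_))
    rw [quarticForm]; ring
  obtain ⟨a, b, hab⟩ := exists_bezout_quarticForm (p ^ 2 - q ^ 2) (p * q)
  have hres : (d : ℤ) ∣ 2 ^ 6 * 5 * 17 ^ 3 * (p * q) ^ 17 := by
    rw [← hab]
    refine dvd_add (hB.mul_left a) ((hH.mul_left (p ^ 2 + q ^ 2)).trans ⟨b, ?_⟩)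
    rw [cofactor]; ring
  have hconst : d ∣ 170 ^ 6 := Int.natCast_dvd_natCast.1 <|
    (hdS.pow_right.dvd_of_dvd_mul_right hres).trans (by norm_num)
  exact (hd.dvd_pow_iff_dvd (by norm_num)).1 hconst

lemma isSquare_of_isSquare_sq_mul {c b : ℤ} (hc : c ≠ 0) (h : IsSquare (c ^ 2 * b)) :
    IsSquare b := by
  obtain ⟨r, hr⟩ := isSquare_iff_exists_sq _ |>.1 h
  obtain ⟨t, rfl⟩ : c ∣ r := (Int.pow_dvd_pow_iff two_ne_zero).1 (Dvd.intro b hr)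
  exact ⟨t, mul_left_cancel₀ (pow_ne_zero 2 hc) (by linear_combination hr)⟩

lemma exists_squarefree_mul_sq_of_isSquare_mul {a b : ℤ} (ha : 0 < a) (hab : IsSquare (a * b)) :
    ∃ (d : ℕ) (s : ℤ), Squarefree d ∧ (d : ℤ) ∣ b ∧ a = d * s ^ 2 := by
  lift a to ℕ using ha.le
  obtain ⟨d, s, hd0, hs0, rfl, hd⟩ := Nat.sq_mul_squarefree_of_pos (Int.natCast_pos.1 ha)
  push_cast [mul_assoc] at hab ⊢
  obtain ⟨t, ht⟩ := isSquare_iff_exists_sq _ |>.1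
    (isSquare_of_isSquare_sq_mul (Int.natCast_ne_zero.2 hs0.ne') hab)
  obtain ⟨v, rfl⟩ : (d : ℤ) ∣ t :=
    ((Int.squarefree_natCast.2 hd).dvd_pow_iff_dvd two_ne_zero).1 (Dvd.intro b ht)
  have hb : b = d * v ^ 2 :=
    mul_left_cancel₀ (Int.natCast_ne_zero.2 hd0.ne') (by linear_combination ht)
  exact ⟨d, s, hd, Dvd.intro _ hb.symm, mul_comm _ _⟩

lemma quarticForm_eq_one_of_isCoprime_zmod_three {p q : ZMod 3} (h : IsCoprime p q) :
    quarticForm (p ^ 2 - q ^ 2) (p * q) = 1 := by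
  revert p q
  unfold IsCoprime quarticForm
  decide

lemma quarticForm_modEq_one_of_odd {T S : ℤ} (hT : Odd T) (hS : Even S) :
    quarticForm T S ≡ 1 [ZMOD 8] := by
  obtain ⟨s, rfl⟩ := hS.two_dvd
  obtain ⟨t, ht⟩ := Int.eight_dvd_sq_sub_one_of_odd hT
  refine Int.modEq_iff_dvd.2 ⟨-(t * (T ^ 2 + 1) + 2 * s ^ 2 * (T - 2 * s) ^ 2), ?_⟩
  rw [quarticForm]
  linear_combination -(T ^ 2 + 1) * ht

lemma exists_quarticForm_eight_mul_eq (w : ℤ) {S : ℤ} (hS : Odd S) :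
    ∃ u, quarticForm (8 * w) S = 2 ^ 2 * u ∧ u ≡ 1 [ZMOD 8] := by
  have hodd : Odd (S * (8 * w - S)) :=
    hS.mul (Even.sub_odd ((show Even (8 : ℤ) by decide).mul_right w) hS)
  obtain ⟨t, ht⟩ := Int.eight_dvd_sq_sub_one_of_odd hodd
  refine ⟨(S * (8 * w - S)) ^ 2 + 1024 * w ^ 4, by rw [quarticForm]; ring,
    Int.modEq_iff_dvd.2 ⟨-(t + 128 * w ^ 4), by linear_combination -ht⟩⟩

lemma exists_quarticForm_eq_sq_mul_modEq_eight {p q : ℤ} (hpq : IsCoprime p q) :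
    ∃ c u : ℤ, (c = 1 ∨ c = 2) ∧ quarticForm (p ^ 2 - q ^ 2) (p * q) = c ^ 2 * u ∧
      u ≡ 1 [ZMOD 8] := by
  by_cases hS : Even (p * q)
  · have hT : Odd (p ^ 2 - q ^ 2) := by
      rw [← Int.isCoprime_two_right]
      exact (isCoprime_sq_sub_sq_mul hpq).of_isCoprime_of_dvd_right hS.two_dvd
    exact ⟨1, _, .inl rfl, by rw [one_pow, one_mul], quarticForm_modEq_one_of_odd hT hS⟩
  · have hS := Int.not_even_iff_odd.1 hS
    obtain ⟨hp, hq⟩ := Int.odd_mul.1 hS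
    obtain ⟨w, hw⟩ : (8 : ℤ) ∣ p ^ 2 - q ^ 2 := by
      simpa only [sub_sub_sub_cancel_right] using
        dvd_sub (Int.eight_dvd_sq_sub_one_of_odd hp) (Int.eight_dvd_sq_sub_one_of_odd hq)
    obtain ⟨u, hu, hu8⟩ := exists_quarticForm_eight_mul_eq w hS
    exact ⟨2, u, .inr rfl, hw ▸ hu, hu8⟩

lemma exists_quarticForm_eq_sq_mul {p q : ℤ} (hpq : IsCoprime p q) :
    ∃ c u : ℤ, c ≠ 0 ∧ quarticForm (p ^ 2 - q ^ 2) (p * q) = c ^ 2 * u ∧ (u : ZMod 24) = 1 := by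
  obtain ⟨c, u, hc, hB, hu8⟩ := exists_quarticForm_eq_sq_mul_modEq_eight hpq
  have hB3 : quarticForm (p ^ 2 - q ^ 2) (p * q) ≡ 1 [ZMOD 3] := by
    have h := quarticForm_eq_one_of_isCoprime_zmod_three (hpq.map (Int.castRingHom (ZMod 3)))
    refine (ZMod.intCast_eq_intCast_iff _ _ 3).1 ?_
    simpa [quarticForm] using h
  have hu24 : u ≡ 1 [ZMOD 24] := by
    rw [hB] at hB3
    unfold Int.ModEq at *
    rcases hc with rfl | rfl <;> omega
  exact ⟨c, u, by omega, hB, by exact_mod_cast (ZMod.intCast_eq_intCast_iff u 1 24).2 hu24⟩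

lemma eq_one_of_mul_sq_eq_one_of_dvd {d : ℕ} {s : ZMod 24} (hd : d ∣ 170)
    (h : d * s ^ 2 = 1) : d = 1 := by
  -- `(ℤ/24ℤ)ˣ` has exponent `2`, so the hypothesis says that `d ≡ 1` modulo `24`.
  have key : ∀ d ∈ Nat.divisors 170, ∀ s : ZMod 24, d * s ^ 2 = 1 → d = 1 := by decide
  exact key d (Nat.mem_divisors.2 ⟨hd, by norm_num⟩) s h

theorem isSquare_quarticForm {p q : ℤ} (hpq : IsCoprime p q)
    (h : IsSquare (quarticForm (p ^ 2 - q ^ 2) (p * q) * cofactor p q)) :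
    IsSquare (quarticForm (p ^ 2 - q ^ 2) (p * q)) := by
  obtain ⟨c, u, hc, hB, hu⟩ := exists_quarticForm_eq_sq_mul hpq
  have hu0 : 0 < u := by
    have : 0 ≤ c ^ 2 * u := by rw [← hB, quarticForm]; positivity
    refine (nonneg_of_mul_nonneg_right this (by positivity)).lt_of_ne' ?_
    rintro rfl
    exact absurd hu (by decide)
  have huH : IsSquare (u * cofactor p q) :=
    isSquare_of_isSquare_sq_mul hc (by rwa [hB, mul_assoc] at h)
  obtain ⟨d, s, hd, hdH, rfl⟩ := exists_squarefree_mul_sq_of_isSquare_mul hu0 huH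
  have hdB : (d : ℤ) ∣ quarticForm (p ^ 2 - q ^ 2) (p * q) :=
    hB ▸ (Dvd.intro _ rfl).mul_left _
  have hd1 : d = 1 := eq_one_of_mul_sq_eq_one_of_dvd
    (dvd_of_dvd_quarticForm_of_dvd_cofactor hpq hd hdB hdH) (s := s) (by exact_mod_cast hu)
  exact ⟨c * s, by rw [hB, hd1]; push_cast; ring⟩

lemma sq_eq_sq_or_eq_zero_of_isSquare {p q : ℤ} (hpq : IsCoprime p q)
    (h : IsSquare (quarticForm (p ^ 2 - q ^ 2) (p * q) * cofactor p q)) :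
    p ^ 2 = q ^ 2 ∨ p * q = 0 := by
  have hTS : IsCoprime (p ^ 2 - q ^ 2) (p * q) := isCoprime_sq_sub_sq_mul hpq
  obtain ⟨z, hz⟩ := isSquare_iff_exists_sq _ |>.1 (isSquare_quarticForm hpq h)
  rcases eq_zero_of_quarticForm_eq_sq hTS hz with hT | hS
  · exact .inl (sub_eq_zero.1 hT)
  · refine (mul_eq_zero.1 hS).symm.imp_left fun hS ↦ ?_
    rw [sub_eq_zero.1 hS, isCoprime_self, IsUnit.mul_iff] at hTS
    rw [Int.isUnit_sq hTS.1, Int.isUnit_sq hTS.2]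

lemma isSquare_quarticForm_mul_cofactor {x y : ℚ}
    (h : y ^ 2 = (x ^ 2 + 1) * (x ^ 8 - 8 * x ^ 5 + 2 * x ^ 4 + 8 * x ^ 3 + 1) *
      ((x ^ 2 - 2 * x - 1) * (x ^ 6 - 3 * x ^ 4 - 16 * x ^ 3 + 3 * x ^ 2 - 1))) :
    IsSquare (quarticForm (x.num ^ 2 - x.den ^ 2) (x.num * x.den) * cofactor x.num x.den) := by
  rw [← Rat.isSquare_intCast_iff, isSquare_iff_exists_sq]
  refine ⟨y * x.den ^ 9, ?_⟩
  rw [mul_pow, h, quarticForm, cofactor]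
  push_cast
  rw [← Rat.mul_den_eq_num x]
  ring

theorem eq_one_or_eq_neg_one_or_eq_zero_of_curve {x y : ℚ}
    (h : y ^ 2 = (x ^ 2 + 1) * (x ^ 8 - 8 * x ^ 5 + 2 * x ^ 4 + 8 * x ^ 3 + 1) *
      ((x ^ 2 - 2 * x - 1) * (x ^ 6 - 3 * x ^ 4 - 16 * x ^ 3 + 3 * x ^ 2 - 1))) :
    x = 1 ∨ x = -1 ∨ x = 0 := by
  have hpq : IsCoprime x.num x.den := Int.isCoprime_iff_gcd_eq_one.2 x.reduced
  rcases sq_eq_sq_or_eq_zero_of_isSquare hpq (isSquare_quarticForm_mul_cofactor h) with hx | hx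
  · have hx1 : x ^ 2 = 1 := by
      rw [← Rat.num_div_den x, div_pow, div_eq_one_iff_eq (pow_ne_zero 2 (mod_cast x.den_nz))]
      exact_mod_cast hx
    exact or_assoc.1 (.inl (sq_eq_one_iff.1 hx1))
  · exact .inr (.inr (Rat.num_eq_zero.1 ((mul_eq_zero.1 hx).resolve_right (mod_cast x.den_nz))))

/-- The affine rational points of the hyperelliptic curve
`y² = (x² + 1)(x⁸ − 8x⁵ + 2x⁴ + 8x³ + 1)(x² − 2x − 1)(x⁶ − 3x⁴ − 16x³ + 3x² − 1)`
are exactly `(±1, ±16)` and `(0, ±1)`. -/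
theorem genus8_curve_points (x y : ℚ) :
    y ^ 2 = (x ^ 2 + 1) * (x ^ 8 - 8 * x ^ 5 + 2 * x ^ 4 + 8 * x ^ 3 + 1) *
      ((x ^ 2 - 2 * x - 1) * (x ^ 6 - 3 * x ^ 4 - 16 * x ^ 3 + 3 * x ^ 2 - 1)) ↔
    (x = 1 ∧ y = 16) ∨ (x = 1 ∧ y = -16) ∨
    (x = -1 ∧ y = 16) ∨ (x = -1 ∧ y = -16) ∨
    (x = 0 ∧ y = 1) ∨ (x = 0 ∧ y = -1) := by
  constructor
  · intro h
    rcases eq_one_or_eq_neg_one_or_eq_zero_of_curve h with rfl | rfl | rfl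
    · have hy : y = 16 ∨ y = -16 := sq_eq_sq_iff_eq_or_eq_neg.1 (by linarith)
      grind
    · have hy : y = 16 ∨ y = -16 := sq_eq_sq_iff_eq_or_eq_neg.1 (by linarith)
      grind
    · have hy : y = 1 ∨ y = -1 := sq_eq_sq_iff_eq_or_eq_neg.1 (by linarith)
      grind
  · rintro (⟨rfl, rfl⟩ | ⟨rfl, rfl⟩ | ⟨rfl, rfl⟩ | ⟨rfl, rfl⟩ | ⟨rfl, rfl⟩ | ⟨rfl, rfl⟩) <;>
      norm_num
end
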